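/- arXiv:1502.03415 — 4 statements merged into one kernel-verified Lean document; each statement's English description precedes it below -/
import Mathlib

section
/- Let K ∈ ℝ^{p×n} be such that A + BK is Hurwitz. If there exists a locally Lipschitz map α₀: ℝ^n → ℝ^p, differentiable at 0 with α₀(0) = 0 and Dα₀(0) = K, such that the origin of dχ/dt = a(χ) + b(χ)α₀(χ) is globally asymptotically stable, then there exists a C² proper positive definite function V: ℝ^n → ℝ≥0 such that, with P := (1/2)·H(V)(0) (half the Hessian of V at 0): (i) P is positive definite and (A + BK)ᵀP + P(A + BK) is negative definite; and (ii) for every χ ∈ ℝ^n \ {0}, L_bV(χ) = 0 implies L_aV(χ) < 0 (Artstein condition). -/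
open Matrix Filter Topology Asymptotics

noncomputable section

/-- `V` is proper: `V χ → ∞` as `‖χ‖ → ∞`. -/
def IsProper {E : Type*} [NormedAddCommGroup E] (V : E → ℝ) : Prop :=
  Filter.Tendsto V (Bornology.cobounded E) Filter.atTop

/-- `V` is positive definite: `V 0 = 0` and `V x > 0` for `x ≠ 0`. -/
def IsPosDefFn {E : Type*} [NormedAddCommGroup E] (V : E → ℝ) : Prop :=
  V 0 = 0 ∧ ∀ x : E, x ≠ 0 → 0 < V x

/-- The Hessian matrix of `V` at `x`. -/
def hessianAt {n : ℕ} (V : (Fin n → ℝ) → ℝ) (x : Fin n → ℝ) :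
    Matrix (Fin n) (Fin n) ℝ :=
  Matrix.of fun i j => iteratedFDeriv ℝ 2 V x ![Pi.single i 1, Pi.single j 1]

/-- A real square matrix is Hurwitz if all of its (complex) eigenvalues have
negative real part. -/
def Hurwitz {ι : Type*} [Fintype ι] [DecidableEq ι] (M : Matrix ι ι ℝ) : Prop :=
  ∀ μ : ℂ, μ ∈ spectrum ℂ (M.map (algebraMap ℝ ℂ)) → μ.re < 0

/-- Global asymptotic stability of the origin for `χ' = F (χ)`:
(i) Lyapunov stability of the origin, and (ii) for every initial condition there is a
solution defined on all of `[0, ∞)` converging to the origin (for a locally Lipschitz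
vector field, by uniqueness of solutions, this is equivalent to requiring every maximal
solution to be defined on `[0,∞)` and to converge to the origin). -/
def IsGAS {E : Type*} [NormedAddCommGroup E] [NormedSpace ℝ E] (F : E → E) : Prop :=
  (∀ ε > 0, ∃ δ > 0, ∀ (χ : ℝ → E) (T : ℝ),
      (∀ t ∈ Set.Ico (0:ℝ) T, HasDerivAt χ (F (χ t)) t) →
      ‖χ 0‖ ≤ δ → ∀ t ∈ Set.Ico (0:ℝ) T, ‖χ t‖ ≤ ε) ∧
  (∀ x₀ : E, ∃ χ : ℝ → E, χ 0 = x₀ ∧ (∀ t : ℝ, 0 ≤ t → HasDerivAt χ (F (χ t)) t) ∧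
      Filter.Tendsto χ Filter.atTop (nhds 0))


set_option linter.unusedSectionVars false
set_option linter.unusedVariables false

section FlowPart

variable {E : Type*} [NormedAddCommGroup E] [NormedSpace ℝ E]

lemma lip_ball [ProperSpace E] {X : Type*} [PseudoMetricSpace X] {F : E → X}
    (hF : LocallyLipschitz F) (c : E) (R : ℝ) :
    ∃ k, LipschitzOnWith k F (Metric.closedBall c R) :=
  (hF.locallyLipschitzOn (s := Metric.closedBall c R)).exists_lipschitzOnWith_of_compact
    (isCompact_closedBall c R)

lemma flow_cont {F : E → E} {φ : E → ℝ → E}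
    (hd : ∀ x t, 0 ≤ t → HasDerivAt (φ x) (F (φ x t)) t) (x : E) (T : ℝ) :
    ContinuousOn (φ x) (Set.Icc 0 T) :=
  fun t ht => (hd x t ht.1).continuousAt.continuousWithinAt

lemma flow_bdd {F : E → E} {φ : E → ℝ → E}
    (hd : ∀ x t, 0 ≤ t → HasDerivAt (φ x) (F (φ x t)) t) (x : E) (T : ℝ) :
    ∃ R, ∀ t ∈ Set.Icc 0 T, ‖φ x t‖ ≤ R :=
  isCompact_Icc.exists_bound_of_continuousOn (flow_cont hd x T)

lemma flow_gronwall {F : E → E} {φ : E → ℝ → E}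
    (hd : ∀ x t, 0 ≤ t → HasDerivAt (φ x) (F (φ x t)) t) {k : NNReal} {s : Set E}
    (hk : LipschitzOnWith k F s) (h0 : ∀ x, φ x 0 = x) {x y : E} {T : ℝ}
    (hx : ∀ t ∈ Set.Ico 0 T, φ x t ∈ s) (hy : ∀ t ∈ Set.Ico 0 T, φ y t ∈ s) :
    ∀ t ∈ Set.Icc 0 T, ‖φ x t - φ y t‖ ≤ Real.exp (k * t) * ‖x - y‖ := by
  intro t ht
  have := dist_le_of_trajectories_ODE_of_mem (v := fun _ => F) (s := fun _ => s) (K := k)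
    (f := φ x) (g := φ y) (a := 0) (b := T) (δ := ‖x - y‖)
    (fun _ _ => hk) (flow_cont hd x T)
    (fun t ht => (hd x t ht.1).hasDerivWithinAt) hx (flow_cont hd y T)
    (fun t ht => (hd y t ht.1).hasDerivWithinAt) hy (by rw [h0, h0, dist_eq_norm]) t ht
  rw [dist_eq_norm, sub_zero] at this
  linarith

lemma flow_local [ProperSpace E] {F : E → E} (hF : LocallyLipschitz F) {φ : E → ℝ → E}
    (h0 : ∀ x, φ x 0 = x) (hd : ∀ x t, 0 ≤ t → HasDerivAt (φ x) (F (φ x t)) t)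
    (x₀ : E) (T : ℝ) (hT : 0 ≤ T) :
    ∃ δ > 0, ∃ L ≥ 0, ∃ R, ∀ x ∈ Metric.ball x₀ δ, ∀ y ∈ Metric.ball x₀ δ, ∀ t ∈ Set.Icc 0 T,
      ‖φ x t‖ ≤ R ∧ ‖φ x t - φ y t‖ ≤ L * ‖x - y‖ := by
  obtain ⟨R, hR⟩ := flow_bdd hd x₀ T
  obtain ⟨k, hk⟩ := lip_ball hF 0 (R + 1)
  have hexp : 0 < Real.exp (k * T) := Real.exp_pos _
  set δ := (Real.exp (k * T))⁻¹ / 2 with hδ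
  have hδ0 : 0 < δ := by positivity
  have hδe : Real.exp (k * T) * δ = 1 / 2 := by rw [hδ]; field_simp
  have hle : ∀ t ∈ Set.Icc 0 T, Real.exp (k * t) ≤ Real.exp (k * T) := fun t ht =>
    Real.exp_le_exp.2 (mul_le_mul_of_nonneg_left ht.2 k.2)
  have key : ∀ x ∈ Metric.ball x₀ δ, ∀ t ∈ Set.Icc 0 T, ‖φ x t - φ x₀ t‖ < 1 := by
    intro x hx
    by_contra hcon
    push Not at hcon
    obtain ⟨t₁, ht₁, h1⟩ := hcon
    have hcont : ContinuousOn (fun t => ‖φ x t - φ x₀ t‖) (Set.Icc 0 T) :=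
      ((flow_cont hd x T).sub (flow_cont hd x₀ T)).norm
    have hcomp : IsCompact (Set.Icc 0 T ∩ (fun t => ‖φ x t - φ x₀ t‖) ⁻¹' Set.Ici 1) :=
      isCompact_Icc.of_isClosed_subset
        (hcont.preimage_isClosed_of_isClosed isClosed_Icc isClosed_Ici) Set.inter_subset_left
    obtain ⟨τ, ⟨hτ, hτ1⟩, hmin⟩ := hcomp.exists_isLeast ⟨t₁, ht₁, h1⟩
    have hbef : ∀ t ∈ Set.Ico 0 τ, ‖φ x t - φ x₀ t‖ < 1 := by
      intro t ht
      by_contra hc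
      push Not at hc
      exact absurd (hmin ⟨⟨ht.1, ht.2.le.trans hτ.2⟩, hc⟩) (not_le.2 ht.2)
    have hb0 : ∀ t ∈ Set.Ico 0 τ, ‖φ x₀ t‖ ≤ R := fun t ht => hR t ⟨ht.1, ht.2.le.trans hτ.2⟩
    have := flow_gronwall hd hk h0 (x := x) (y := x₀) (T := τ)
      (fun t ht => by
        rw [mem_closedBall_zero_iff]
        have h1 := hbef t ht
        have h2 := hb0 t ht
        have h3 := norm_le_norm_add_norm_sub' (φ x t) (φ x₀ t)
        linarith)
      (fun t ht => by
        rw [mem_closedBall_zero_iff]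
        linarith [hb0 t ht]) τ ⟨hτ.1, le_rfl⟩
    have h4 : ‖x - x₀‖ ≤ δ := by rw [← dist_eq_norm]; exact (Metric.mem_ball.1 hx).le
    have h5 : Real.exp (k * τ) * ‖x - x₀‖ ≤ Real.exp (k * T) * δ :=
      mul_le_mul (hle τ hτ) h4 (norm_nonneg _) hexp.le
    have h6 : (1:ℝ) ≤ ‖φ x τ - φ x₀ τ‖ := hτ1
    linarith
  have hin : ∀ x ∈ Metric.ball x₀ δ, ∀ t ∈ Set.Icc 0 T, ‖φ x t‖ ≤ R + 1 := by
    intro x hx t ht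
    have h1 := key x hx t ht
    have h3 := norm_le_norm_add_norm_sub' (φ x t) (φ x₀ t)
    linarith [hR t ht]
  refine ⟨δ, hδ0, Real.exp (k * T), hexp.le, R + 1, fun x hx y hy t ht => ⟨hin x hx t ht, ?_⟩⟩
  have := flow_gronwall hd hk h0 (x := x) (y := y) (T := T)
    (fun t ht => mem_closedBall_zero_iff.2 (hin x hx t ⟨ht.1, ht.2.le⟩))
    (fun t ht => mem_closedBall_zero_iff.2 (hin y hy t ⟨ht.1, ht.2.le⟩)) t ht
  exact this.trans (mul_le_mul_of_nonneg_right (hle t ht) (norm_nonneg _))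

lemma flow_semi [ProperSpace E] {F : E → E} (hF : LocallyLipschitz F) {φ : E → ℝ → E}
    (h0 : ∀ x, φ x 0 = x) (hd : ∀ x t, 0 ≤ t → HasDerivAt (φ x) (F (φ x t)) t)
    (x : E) (s t : ℝ) (hs : 0 ≤ s) (ht : 0 ≤ t) : φ (φ x s) t = φ x (s + t) := by
  obtain ⟨R₁, hR₁⟩ := flow_bdd hd (φ x s) t
  obtain ⟨R₂, hR₂⟩ := flow_bdd hd x (s + t)
  obtain ⟨k, hk⟩ := lip_ball hF 0 (max R₁ R₂)
  have hd2 : ∀ u, 0 ≤ u → HasDerivAt (fun u => φ x (s + u)) (F (φ x (s + u))) u := by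
    intro u hu
    exact (hd x (s + u) (by positivity)).comp_const_add s u
  have := dist_le_of_trajectories_ODE_of_mem (v := fun _ => F)
    (s := fun _ => Metric.closedBall 0 (max R₁ R₂)) (K := k)
    (f := φ (φ x s)) (g := fun u => φ x (s + u)) (a := 0) (b := t) (δ := 0)
    (fun _ _ => hk) (flow_cont hd _ t)
    (fun t ht => (hd _ t ht.1).hasDerivWithinAt)
    (fun u hu => mem_closedBall_zero_iff.2 ((hR₁ u ⟨hu.1, hu.2.le⟩).trans (le_max_left _ _)))
    (fun u hu => (hd2 u hu.1).continuousAt.continuousWithinAt)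
    (fun u hu => (hd2 u hu.1).hasDerivWithinAt)
    (fun u hu => mem_closedBall_zero_iff.2 ((hR₂ (s + u)
      ⟨by linarith [hu.1], by linarith [hu.2]⟩).trans (le_max_right _ _)))
    (by simp [h0]) t ⟨ht, le_rfl⟩
  simpa using this

lemma flow_near [ProperSpace E] {F : E → E} (hF : LocallyLipschitz F) {φ : E → ℝ → E}
    (h0 : ∀ x, φ x 0 = x) (hd : ∀ x t, 0 ≤ t → HasDerivAt (φ x) (F (φ x t)) t)
    (x₀ : E) (ε : ℝ) (hε : 0 < ε) :
    ∃ δ > 0, ∀ z ∈ Metric.ball x₀ δ, ∀ s, 0 ≤ s → s < δ → φ z s ∈ Metric.ball x₀ ε := by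
  obtain ⟨δ, hδ, L, hL, R, h⟩ := flow_local hF h0 hd x₀ 1 zero_le_one
  have hc := (hd x₀ 0 le_rfl).continuousAt
  rw [Metric.continuousAt_iff] at hc
  obtain ⟨δ₂, hδ₂, hc⟩ := hc (ε / 2) (by positivity)
  have hL1 : 0 < L + 1 := by linarith
  refine ⟨min (min δ δ₂) (min 1 (ε / 2 / (L + 1))), by positivity, fun z hz s hs hs1 => ?_⟩
  rw [Metric.mem_ball, lt_min_iff, lt_min_iff, lt_min_iff] at hz
  rw [lt_min_iff, lt_min_iff, lt_min_iff] at hs1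
  have h1 := (h z hz.1.1 x₀ (Metric.mem_ball_self hδ) s ⟨hs, hs1.2.1.le⟩).2
  have h2 := @hc s (by rw [Real.dist_eq, sub_zero, abs_of_nonneg hs]; exact hs1.1.2)
  rw [h0] at h2
  have h3 : ‖z - x₀‖ < ε / 2 / (L + 1) := by rw [← dist_eq_norm]; exact hz.2.2
  rw [lt_div_iff₀ hL1] at h3
  rw [← dist_eq_norm] at h1
  rw [Metric.mem_ball]
  have := dist_triangle (φ z s) (φ x₀ s) x₀
  nlinarith [norm_nonneg (z - x₀)]

end FlowPart

section PosPart

lemma hasDerivAt_pp (n : ℕ) (s : ℝ) :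
    HasDerivAt (fun s : ℝ => (max 0 s) ^ (n + 2)) ((n + 2) * (max 0 s) ^ (n + 1)) s := by
  rcases lt_trichotomy s 0 with h | h | h
  · have : (fun s : ℝ => (max 0 s) ^ (n + 2)) =ᶠ[𝓝 s] fun _ => 0 := by
      filter_upwards [Iio_mem_nhds h] with u hu
      rw [max_eq_left (le_of_lt hu)]; simp
    rw [max_eq_left h.le]
    simpa using (hasDerivAt_const s (0:ℝ)).congr_of_eventuallyEq this
  · subst h
    have h1 : HasDerivWithinAt (fun s : ℝ => (max 0 s) ^ (n + 2)) 0 (Set.Iic 0) 0 := by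
      refine (hasDerivWithinAt_const (0:ℝ) (Set.Iic 0) (0:ℝ)).congr (fun u hu => ?_) (by simp)
      rw [max_eq_left hu]; simp
    have h2 : HasDerivWithinAt (fun s : ℝ => (max 0 s) ^ (n + 2)) 0 (Set.Ici 0) 0 := by
      have h3 : HasDerivWithinAt (fun s : ℝ => s ^ (n + 2)) 0 (Set.Ici 0) 0 := by
        simpa using (hasDerivAt_pow (n + 2) (0:ℝ)).hasDerivWithinAt
      refine h3.congr (fun u hu => ?_) (by simp)
      rw [max_eq_right hu]
    have := h1.union h2
    rw [Set.Iic_union_Ici, hasDerivWithinAt_univ] at this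
    simpa using this
  · have : (fun s : ℝ => (max 0 s) ^ (n + 2)) =ᶠ[𝓝 s] fun u => u ^ (n + 2) := by
      filter_upwards [Ioi_mem_nhds h] with u hu
      rw [max_eq_right (le_of_lt hu)]
    rw [max_eq_right h.le]
    simpa using (hasDerivAt_pow (n + 2) s).congr_of_eventuallyEq this

lemma hasDerivAt_p2 (s : ℝ) : HasDerivAt (fun s : ℝ => (max 0 s) ^ 2) (2 * max 0 s) s := by
  simpa using hasDerivAt_pp 0 s

lemma hasDerivAt_p3 (s : ℝ) : HasDerivAt (fun s : ℝ => (max 0 s) ^ 3) (3 * (max 0 s) ^ 2) s := by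
  have := hasDerivAt_pp 1 s
  norm_num at this
  exact this

lemma contDiff_p3 : ContDiff ℝ 2 (fun s : ℝ => (max 0 s) ^ 3) := by
  have e3 : deriv (fun s : ℝ => (max 0 s) ^ 3) = fun s => 3 * (max 0 s) ^ 2 :=
    funext fun s => (hasDerivAt_p3 s).deriv
  have e2 : deriv (fun s : ℝ => (max 0 s) ^ 2) = fun s => 2 * (max 0 s) :=
    funext fun s => (hasDerivAt_p2 s).deriv
  have h2 : ContDiff ℝ 1 (fun s : ℝ => (max 0 s) ^ 2) := by
    rw [contDiff_one_iff_deriv]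
    refine ⟨fun s => (hasDerivAt_p2 s).differentiableAt, ?_⟩
    rw [e2]; fun_prop
  rw [show (2 : WithTop ℕ∞) = 1 + 1 by norm_num, contDiff_succ_iff_deriv]
  refine ⟨fun s => (hasDerivAt_p3 s).differentiableAt, by simp, ?_⟩
  rw [e3]; exact contDiff_const.mul h2

end PosPart

section WPart

variable {E : Type*} [NormedAddCommGroup E] [NormedSpace ℝ E] [ProperSpace E]

lemma inv_sub {F : E → E} {φ : E → ℝ → E}
    (h0 : ∀ x, φ x 0 = x) (hd : ∀ x t, 0 ≤ t → HasDerivAt (φ x) (F (φ x t)) t)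
    {q : E → ℝ} (hq : Differentiable ℝ q) {r : ℝ}
    (hdec : ∀ x, q x = r → fderiv ℝ q x (F x) < 0) (x : E) (hx : q x ≤ r) (t : ℝ) (ht : 0 ≤ t) :
    q (φ x t) ≤ r := by
  have hder : ∀ s, 0 ≤ s → HasDerivAt (fun s => q (φ x s)) (fderiv ℝ q (φ x s) (F (φ x s))) s :=
    fun s hs => (hq _).hasFDerivAt.comp_hasDerivAt s (hd x s hs)
  refine image_le_of_deriv_right_lt_deriv_boundary (a := 0) (b := t) (f := fun s => q (φ x s))
    (f' := fun s => fderiv ℝ q (φ x s) (F (φ x s))) (B := fun _ => r) (B' := fun _ => 0)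
    (fun s hs => (hder s hs.1).continuousAt.continuousWithinAt)
    (fun s hs => (hder s hs.1).hasDerivWithinAt) (by simpa [h0] using hx)
    (fun s => hasDerivAt_const _ _) (fun s _ h => hdec _ h) ⟨ht, le_rfl⟩

lemma enter_sub {F : E → E} (hF : LocallyLipschitz F) {φ : E → ℝ → E}
    (h0 : ∀ x, φ x 0 = x) (hd : ∀ x t, 0 ≤ t → HasDerivAt (φ x) (F (φ x t)) t)
    (hlim : ∀ x, Tendsto (φ x) atTop (𝓝 0))
    {q : E → ℝ} (hq : Differentiable ℝ q) {r : ℝ} (hr : q 0 < r)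
    (hdec : ∀ x, q x = r → fderiv ℝ q x (F x) < 0) (x₀ : E) :
    ∃ T ≥ 0, ∃ δ > 0, ∀ x ∈ Metric.ball x₀ δ, ∀ t, T ≤ t → q (φ x t) ≤ r := by
  have h1 : ∀ᶠ t in atTop, q (φ x₀ t) < r :=
    ((hq.continuous.tendsto 0).comp (hlim x₀)).eventually (Iio_mem_nhds hr)
  obtain ⟨T, hT, hT0⟩ := (h1.and (eventually_ge_atTop (0:ℝ))).exists
  obtain ⟨δ, hδ, L, hL, R, h⟩ := flow_local hF h0 hd x₀ T hT0
  have h2 : {y | q y < r} ∈ 𝓝 (φ x₀ T) := hq.continuous.continuousAt (Iio_mem_nhds hT)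
  obtain ⟨ε, hε, h2⟩ := Metric.mem_nhds_iff.1 h2
  have hL1 : 0 < L + 1 := by linarith
  refine ⟨T, hT0, min δ (ε / (L + 1)), by positivity, fun x hx t ht => ?_⟩
  rw [Metric.mem_ball, lt_min_iff] at hx
  have h3 := (h x hx.1 x₀ (Metric.mem_ball_self hδ) T ⟨hT0, le_rfl⟩).2
  have h4 : ‖x - x₀‖ < ε / (L + 1) := by rw [← dist_eq_norm]; exact hx.2
  rw [lt_div_iff₀ hL1] at h4
  have h5 : q (φ x T) < r := h2 (by
    rw [Metric.mem_ball, dist_eq_norm]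
    nlinarith [norm_nonneg (x - x₀)])
  have := inv_sub h0 hd hq hdec (φ x T) h5.le (t - T) (by linarith)
  rwa [flow_semi hF h0 hd x T (t - T) hT0 (by linarith), add_sub_cancel] at this

def Wf (φ : E → ℝ → E) (g : E → ℝ) (x : E) : ℝ := ∫ t in Set.Ioi (0:ℝ), g (φ x t)

lemma Wf_eq (φ : E → ℝ → E) (g : E → ℝ) (x : E) (T : ℝ) (hT : 0 ≤ T)
    (h : ∀ t, T ≤ t → g (φ x t) = 0) : Wf φ g x = ∫ t in (0:ℝ)..T, g (φ x t) := by
  rw [intervalIntegral.integral_of_le hT, Wf]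
  refine MeasureTheory.setIntegral_eq_of_subset_of_forall_sdiff_eq_zero measurableSet_Ioi
    Set.Ioc_subset_Ioi_self ?_
  rintro t ⟨ht, ht2⟩
  refine h t ?_
  by_contra hc
  exact ht2 ⟨ht, (not_le.1 hc).le⟩

lemma gint {F : E → E} {φ : E → ℝ → E}
    (hd : ∀ x t, 0 ≤ t → HasDerivAt (φ x) (F (φ x t)) t) {g : E → ℝ} (hg : Continuous g)
    (x : E) (s t : ℝ) (hs : 0 ≤ s) (ht : 0 ≤ t) :
    IntervalIntegrable (fun u => g (φ x u)) MeasureTheory.volume s t := by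
  refine ContinuousOn.intervalIntegrable fun u hu => ?_
  have : 0 ≤ u := (le_min hs ht).trans hu.1
  exact (hg.continuousAt.comp (hd x u this).continuousAt).continuousWithinAt

lemma Wf_lip {F : E → E} (hF : LocallyLipschitz F) {φ : E → ℝ → E}
    (h0 : ∀ x, φ x 0 = x) (hd : ∀ x t, 0 ≤ t → HasDerivAt (φ x) (F (φ x t)) t)
    {g : E → ℝ} (hg : LocallyLipschitz g)
    (hent : ∀ x₀, ∃ T ≥ 0, ∃ δ > 0, ∀ x ∈ Metric.ball x₀ δ, ∀ t, T ≤ t → g (φ x t) = 0) (x₀ : E) :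
    ∃ δ > 0, ∃ L ≥ 0, ∀ x ∈ Metric.ball x₀ δ, ∀ y ∈ Metric.ball x₀ δ,
      Wf φ g x ≤ Wf φ g y + L * ‖x - y‖ := by
  obtain ⟨T, hT, δ₁, hδ₁, h1⟩ := hent x₀
  obtain ⟨δ, hδ, L, hL, R, h⟩ := flow_local hF h0 hd x₀ T hT
  obtain ⟨k, hk⟩ := lip_ball hg 0 R
  refine ⟨min δ₁ δ, by positivity, (k * L) * T, by positivity, fun x hx y hy => ?_⟩
  rw [Metric.mem_ball, lt_min_iff] at hx hy
  rw [Wf_eq φ g x T hT (h1 x hx.1), Wf_eq φ g y T hT (h1 y hy.1)]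
  have hb : ∀ t ∈ Set.Icc 0 T, g (φ x t) ≤ g (φ y t) + k * L * ‖x - y‖ := by
    intro t ht
    have a1 := h x hx.2 y hy.2 t ht
    have a2 := h y hy.2 x hx.2 t ht
    have a3 := hk.dist_le_mul _ (mem_closedBall_zero_iff.2 a1.1) _ (mem_closedBall_zero_iff.2 a2.1)
    rw [Real.dist_eq, dist_eq_norm] at a3
    have a4 := (abs_le.1 a3).2
    have a5 := mul_le_mul_of_nonneg_left a1.2 k.2
    have : (k : ℝ) * L * ‖x - y‖ = k * (L * ‖x - y‖) := by ring
    change (k : ℝ) * _ ≤ (k : ℝ) * _ at a5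
    linarith
  have hi := gint hd hg.continuous
  have := intervalIntegral.integral_mono_on hT (hi x 0 T le_rfl hT)
    ((hi y 0 T le_rfl hT).add intervalIntegrable_const) hb
  rw [intervalIntegral.integral_add (hi y 0 T le_rfl hT) intervalIntegrable_const,
    intervalIntegral.integral_const, smul_eq_mul] at this
  linarith

lemma Wf_flow {F : E → E} (hF : LocallyLipschitz F) {φ : E → ℝ → E}
    (h0 : ∀ x, φ x 0 = x) (hd : ∀ x t, 0 ≤ t → HasDerivAt (φ x) (F (φ x t)) t)
    {g : E → ℝ} (hg : LocallyLipschitz g)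
    (hent : ∀ x₀, ∃ T ≥ 0, ∃ δ > 0, ∀ x ∈ Metric.ball x₀ δ, ∀ t, T ≤ t → g (φ x t) = 0) (x : E)
    (h : ℝ) (hh : 0 ≤ h) :
    Wf φ g (φ x h) = Wf φ g x - ∫ t in (0:ℝ)..h, g (φ x t) := by
  obtain ⟨T, hT, δ₁, hδ₁, h1⟩ := hent x
  have h2 := h1 x (Metric.mem_ball_self hδ₁)
  have hs := flow_semi hF h0 hd x h
  have hi := gint hd hg.continuous
  rw [Wf_eq φ g x (h + T) (by positivity) (fun t ht => h2 t (by linarith)),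
    Wf_eq φ g (φ x h) T hT (fun t ht => by
      rw [hs t hh (hT.trans ht)]; exact h2 _ (by linarith)),
    ← intervalIntegral.integral_add_adjacent_intervals (hi x 0 h le_rfl hh)
      (hi x h (h + T) hh (by positivity))]
  have : ∫ t in (0:ℝ)..T, g (φ (φ x h) t) = ∫ t in (0:ℝ)..T, g (φ x (h + t)) := by
    refine intervalIntegral.integral_congr fun t ht => ?_
    rw [Set.uIcc_of_le hT] at ht
    simp only [hs t hh ht.1]
  rw [this, intervalIntegral.integral_comp_add_left (fun u => g (φ x u)) h, add_zero]
  ring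

lemma Wf_dec {F : E → E} (hF : LocallyLipschitz F) {φ : E → ℝ → E}
    (h0 : ∀ x, φ x 0 = x) (hd : ∀ x t, 0 ≤ t → HasDerivAt (φ x) (F (φ x t)) t)
    {g : E → ℝ} (hg : LocallyLipschitz g)
    (hent : ∀ x₀, ∃ T ≥ 0, ∃ δ > 0, ∀ x ∈ Metric.ball x₀ δ, ∀ t, T ≤ t → g (φ x t) = 0) (x₀ : E)
    (hgx : 0 < g x₀) :
    ∃ δ > 0, ∀ x ∈ Metric.ball x₀ δ, ∀ z ∈ Metric.ball x₀ δ, ∀ h, 0 < h → h < δ →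
      Wf φ g (z + h • F x) ≤ Wf φ g z - h * δ := by
  obtain ⟨ρ, hρ, L, hL, hlip⟩ := Wf_lip hF h0 hd hg hent x₀
  set c := g x₀ with hc
  have hL1 : 0 < L + 1 := by linarith
  set κ := c / (4 * (L + 1)) with hκ
  have hκ0 : 0 < κ := by positivity
  have hκL : L * κ ≤ c / 4 := by
    have : (L + 1) * κ = c / 4 := by rw [hκ]; field_simp
    nlinarith
  have e1 : {y | 3 * c / 4 < g y} ∈ 𝓝 x₀ :=
    hg.continuous.continuousAt (Ioi_mem_nhds (by linarith))
  have e2 : {y | dist (F y) (F x₀) < κ / 2} ∈ 𝓝 x₀ :=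
    hF.continuous.continuousAt (Metric.ball_mem_nhds _ (by positivity))
  obtain ⟨ε, hε, he⟩ := Metric.mem_nhds_iff.1 (Filter.inter_mem e1 e2)
  obtain ⟨δ₁, hδ₁, hn⟩ := flow_near hF h0 hd x₀ (min ε (ρ / 2)) (by positivity)
  refine ⟨min (min δ₁ ε) (min (ρ / (2 * κ)) (min ρ (c / 2))), by positivity,
    fun x hx z hz h hh hh1 => ?_⟩
  set δ := min (min δ₁ ε) (min (ρ / (2 * κ)) (min ρ (c / 2))) with hδ
  have hδ1 : δ ≤ δ₁ := (min_le_left _ _).trans (min_le_left _ _)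
  have hδ2 : δ ≤ ε := (min_le_left _ _).trans (min_le_right _ _)
  have hδ3 : δ ≤ ρ / (2 * κ) := (min_le_right _ _).trans (min_le_left _ _)
  have hδ4 : δ ≤ ρ := (min_le_right _ _).trans ((min_le_right _ _).trans (min_le_left _ _))
  have hδ5 : δ ≤ c / 2 := (min_le_right _ _).trans ((min_le_right _ _).trans (min_le_right _ _))
  have hfl : ∀ s, 0 ≤ s → s ≤ h → φ z s ∈ Metric.ball x₀ (min ε (ρ / 2)) := fun s hs hs1 =>
    hn z (Metric.ball_subset_ball hδ1 hz) s hs (by linarith)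
  have hx2 := (he (Metric.ball_subset_ball hδ2 hx)).2
  have hfe : ∀ s, 0 ≤ s → s ≤ h → 3 * c / 4 < g (φ z s) ∧ ‖F (φ z s) - F x‖ ≤ κ := by
    intro s hs hs1
    have := he (Metric.ball_subset_ball (min_le_left _ _) (hfl s hs hs1))
    refine ⟨this.1, ?_⟩
    have h3 : dist (F (φ z s)) (F x₀) < κ / 2 := this.2
    have h4 : dist (F x) (F x₀) < κ / 2 := hx2
    rw [← dist_eq_norm]
    have := dist_triangle_right (F (φ z s)) (F x) (F x₀)
    linarith
  have hdiff : ‖φ z h - (z + h • F x)‖ ≤ κ * h := by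
    have hder : ∀ s ∈ Set.Icc 0 h, HasDerivWithinAt (fun s => φ z s - s • F x)
        (F (φ z s) - F x) (Set.Icc 0 h) s := by
      intro s hs
      have := (hd z s hs.1).sub ((hasDerivAt_id s).smul_const (F x))
      rw [one_smul] at this
      exact this.hasDerivWithinAt
    have := norm_image_sub_le_of_norm_deriv_le_segment' hder
      (fun s hs => (hfe s hs.1 hs.2.le).2) h ⟨hh.le, le_rfl⟩
    simp only [h0, zero_smul, sub_zero] at this
    rwa [show φ z h - h • F x - z = φ z h - (z + h • F x) by abel] at this
  have hκh : κ * h < ρ / 2 := by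
    have : h < ρ / (2 * κ) := by linarith
    rw [lt_div_iff₀ (by positivity)] at this
    linarith
  have hm1 : φ z h ∈ Metric.ball x₀ (ρ / 2) :=
    Metric.ball_subset_ball (min_le_right _ _) (hfl h hh.le le_rfl)
  have hm2 : z + h • F x ∈ Metric.ball x₀ ρ := by
    rw [Metric.mem_ball] at hm1 ⊢
    have := dist_triangle_left (z + h • F x) x₀ (φ z h)
    rw [dist_eq_norm (φ z h)] at this
    linarith
  have hl := hlip (z + h • F x) hm2 (φ z h) (Metric.ball_subset_ball (by linarith) hm1)
  rw [norm_sub_rev] at hl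
  have hl2 : L * ‖φ z h - (z + h • F x)‖ ≤ h * (c / 4) := by
    have := mul_le_mul_of_nonneg_left hdiff hL
    nlinarith
  rw [Wf_flow hF h0 hd hg hent z h hh.le] at hl
  have hint : h * (3 * c / 4) ≤ ∫ t in (0:ℝ)..h, g (φ z t) := by
    have := intervalIntegral.integral_mono_on (f := fun _ => 3 * c / 4) hh.le
      intervalIntegrable_const
      (gint hd hg.continuous z 0 h le_rfl hh.le) (fun t ht => (hfe t ht.1 ht.2).1.le)
    rw [intervalIntegral.integral_const, smul_eq_mul, sub_zero] at this
    exact this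
  have : h * δ ≤ h * (c / 2) := mul_le_mul_of_nonneg_left hδ5 hh.le
  linarith

lemma Wf_ge {F : E → E} (hF : Continuous F) {φ : E → ℝ → E}
    (h0 : ∀ x, φ x 0 = x) (hd : ∀ x t, 0 ≤ t → HasDerivAt (φ x) (F (φ x t)) t)
    {q : E → ℝ} (hq : ContDiff ℝ 2 q) {r : ℝ}
    {g : E → ℝ} (hg : Continuous g)
    (hgN : ∀ x, - (2 * max 0 (q x - r) * fderiv ℝ q x (F x)) ≤ g x) (x : E)
    (hent : ∃ T ≥ 0, ∀ t, T ≤ t → q (φ x t) ≤ r) (hgz : ∀ y, q y ≤ r → g y = 0) :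
    (max 0 (q x - r)) ^ 2 ≤ Wf φ g x := by
  obtain ⟨T, hT, h1⟩ := hent
  rw [Wf_eq φ g x T hT (fun t ht => hgz _ (h1 t ht))]
  have hqd : Differentiable ℝ q := hq.differentiable (by norm_num)
  have hder : ∀ t ∈ Set.uIcc 0 T, HasDerivAt (fun t => (max 0 (q (φ x t) - r)) ^ 2)
      (2 * max 0 (q (φ x t) - r) * fderiv ℝ q (φ x t) (F (φ x t))) t := by
    intro t ht
    rw [Set.uIcc_of_le hT] at ht
    have a1 : HasDerivAt (fun t => q (φ x t) - r) (fderiv ℝ q (φ x t) (F (φ x t))) t :=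
      ((hqd _).hasFDerivAt.comp_hasDerivAt t (hd x t ht.1)).sub_const r
    exact (hasDerivAt_p2 (q (φ x t) - r)).comp t a1
  have hcd : Continuous fun y => 2 * max 0 (q y - r) * fderiv ℝ q y (F y) := by
    have := hq.continuous
    have := (hq.continuous_fderiv (by norm_num)).clm_apply hF
    fun_prop
  have hi := gint hd hcd x 0 T le_rfl hT
  have h2 := intervalIntegral.integral_eq_sub_of_hasDerivAt hder hi
  have h3 := intervalIntegral.integral_mono_on hT hi.neg (gint hd hg x 0 T le_rfl hT)
    (fun t _ => hgN (φ x t))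
  simp only [Pi.neg_apply] at h3
  rw [intervalIntegral.integral_neg, h2, h0, max_eq_left (by linarith [h1 T le_rfl])] at h3
  linarith

end WPart

section MolPart

open MeasureTheory

variable {E : Type*} [NormedAddCommGroup E] [NormedSpace ℝ E] [FiniteDimensional ℝ E]
  [MeasurableSpace E] [BorelSpace E]

lemma deriv_ge_of_growth {f : E → ℝ} {x v : E} (hf : DifferentiableAt ℝ f x) {δ : ℝ} (hδ : 0 < δ)
    (h : ∀ s, 0 < s → s < δ → f x + s * δ ≤ f (x + s • v)) : δ ≤ fderiv ℝ f x v := by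
  have h1 : HasDerivAt (fun s : ℝ => x + s • v) v 0 := by
    have := ((hasDerivAt_id (0:ℝ)).smul_const v).const_add x
    rw [one_smul] at this
    exact this
  have h2 : HasDerivAt (fun s : ℝ => f (x + s • v)) (fderiv ℝ f x v) 0 := by
    have hf' : HasFDerivAt f (fderiv ℝ f x) (x + (0:ℝ) • v) := by simpa using hf.hasFDerivAt
    exact hf'.comp_hasDerivAt 0 h1
  have h3 := h2.tendsto_slope_zero_right
  refine ge_of_tendsto h3 ?_
  filter_upwards [Ioo_mem_nhdsGT hδ] with s hs
  have := h s hs.1 hs.2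
  simp only [zero_add, zero_smul, add_zero, smul_eq_mul]
  rw [inv_mul_eq_div, le_div_iff₀ hs.1]
  linarith

lemma mol_deriv (μ : Measure E) [μ.IsAddHaarMeasure] {F : E → E} {w : E → ℝ} (hw : Continuous w)
    {x₀ : E} {δ : ℝ} (hδ : 0 < δ)
    (hdec : ∀ x ∈ Metric.ball x₀ δ, ∀ z ∈ Metric.ball x₀ δ, ∀ h, 0 < h → h < δ →
      w z + h * δ ≤ w (z + h • F x)) (ψ : ContDiffBump (0 : E)) (hψ : ψ.rOut ≤ δ / 2)
    (x : E) (hx : x ∈ Metric.ball x₀ (δ / 2)) :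
    δ ≤ fderiv ℝ (convolution (ψ.normed μ) w (ContinuousLinearMap.lsmul ℝ ℝ) μ) x (F x) := by
  have hcd : ContDiff ℝ 1 (convolution (ψ.normed μ) w (ContinuousLinearMap.lsmul ℝ ℝ) μ) :=
    ψ.hasCompactSupport_normed.contDiff_convolution_left (n := 1) _ ψ.contDiff_normed
      hw.locallyIntegrable
  refine deriv_ge_of_growth ((hcd.differentiable (by norm_num)) x) hδ fun s hs hs1 => ?_
  have hint : ∀ v : E → ℝ, Continuous v → Integrable (fun t => ψ.normed μ t * v t) μ := by
    intro v hv
    exact (ψ.continuous_normed.mul hv).integrable_of_hasCompactSupport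
      (ψ.hasCompactSupport_normed.mul_right)
  simp only [convolution_def, ContinuousLinearMap.lsmul_apply, smul_eq_mul]
  have e : (∫ t, ψ.normed μ t * w (x - t) ∂μ) + s * δ
      = ∫ t, ψ.normed μ t * (w (x - t) + s * δ) ∂μ := by
    simp only [mul_add]
    rw [integral_add (hint _ (by fun_prop)) (ψ.integrable_normed.mul_const _),
      integral_mul_const, ψ.integral_normed, one_mul]
  rw [e]
  refine integral_mono (hint _ (by fun_prop)) (hint _ (by fun_prop)) fun t => ?_
  by_cases ht : t ∈ Metric.ball (0:E) ψ.rOut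
  · refine mul_le_mul_of_nonneg_left ?_ (ψ.nonneg_normed t)
    have := hdec x (Metric.ball_subset_ball (by linarith) hx) (x - t) (by
      rw [mem_ball_zero_iff] at ht
      rw [Metric.mem_ball, dist_eq_norm] at hx ⊢
      have := norm_sub_le (x - x₀) t
      rw [show x - t - x₀ = x - x₀ - t by abel]
      linarith) s hs hs1
    rwa [show x - t + s • F x = x + s • F x - t by abel] at this
  · rw [← ψ.support_normed_eq (μ := μ), Function.notMem_support] at ht
    simp [ht]

lemma mollify {F : E → E} {w : E → ℝ} (hw : Continuous w)
    (hws : HasCompactSupport w) {C : Set E} (hC : IsCompact C)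
    (hdec : ∀ x₀ ∈ C, ∃ δ > 0, ∀ x ∈ Metric.ball x₀ δ, ∀ z ∈ Metric.ball x₀ δ, ∀ h, 0 < h → h < δ →
      w z + h * δ ≤ w (z + h • F x)) {σ : ℝ} (hσ : 0 < σ) :
    ∃ f : E → ℝ, ContDiff ℝ 2 f ∧ (∀ x, |f x - w x| ≤ σ) ∧ ∀ x ∈ C, 0 < fderiv ℝ f x (F x) := by
  let μ : Measure E := Measure.addHaar
  have key : ∃ ε > 0, ∀ ψ : ContDiffBump (0 : E), ψ.rOut ≤ ε → ∀ x ∈ C,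
      0 < fderiv ℝ (convolution (ψ.normed μ) w (ContinuousLinearMap.lsmul ℝ ℝ) μ) x (F x) := by
    refine hC.induction_on (p := fun S => ∃ ε > 0, ∀ ψ : ContDiffBump (0 : E), ψ.rOut ≤ ε →
      ∀ x ∈ S, 0 < fderiv ℝ (convolution (ψ.normed μ) w (ContinuousLinearMap.lsmul ℝ ℝ) μ) x (F x))
      ⟨1, one_pos, fun _ _ x hx => hx.elim⟩ ?_ ?_ ?_
    · rintro s t hst ⟨ε, hε, h⟩
      exact ⟨ε, hε, fun ψ hψ x hx => h ψ hψ x (hst hx)⟩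
    · rintro s t ⟨ε, hε, h⟩ ⟨ε', hε', h'⟩
      refine ⟨min ε ε', lt_min hε hε', fun ψ hψ x hx => ?_⟩
      rcases hx with hx | hx
      · exact h ψ (hψ.trans (min_le_left _ _)) x hx
      · exact h' ψ (hψ.trans (min_le_right _ _)) x hx
    · intro x₀ hx₀
      obtain ⟨δ, hδ, h⟩ := hdec x₀ hx₀
      exact ⟨Metric.ball x₀ (δ / 2), mem_nhdsWithin_of_mem_nhds
        (Metric.ball_mem_nhds _ (by positivity)), δ / 2, by positivity,
        fun ψ hψ x hx => hδ.trans_le (mol_deriv μ hw hδ h ψ hψ x hx)⟩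
  obtain ⟨ε, hε, hk⟩ := key
  have huc : UniformContinuous w := hws.uniformContinuous_of_continuous hw
  obtain ⟨ε', hε', hu⟩ := Metric.uniformContinuous_iff.1 huc σ hσ
  let ψ : ContDiffBump (0:E) := ⟨min ε ε' / 2, min ε ε', by positivity,
    by have : 0 < min ε ε' := lt_min hε hε'
       linarith⟩
  refine ⟨convolution (ψ.normed μ) w (ContinuousLinearMap.lsmul ℝ ℝ) μ,
    ψ.hasCompactSupport_normed.contDiff_convolution_left (n := 2) _ ψ.contDiff_normed
      hw.locallyIntegrable, fun x => ?_, hk ψ (min_le_left _ _)⟩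
  rw [← Real.dist_eq]
  refine ψ.dist_normed_convolution_le hw.aestronglyMeasurable fun y hy => (hu ?_).le
  exact lt_of_lt_of_le hy (min_le_right _ _)

lemma stepC {F : E → E} (hF : Continuous F) {W : E → ℝ} (hW : Continuous W)
    {c c' d' d : ℝ} (hcc : c < c') (hcd : c' ≤ d') (hdd : d' < d) (hcomp : IsCompact {x | W x ≤ d})
    (hdec : ∀ x₀, c ≤ W x₀ → ∃ δ > 0, ∀ x ∈ Metric.ball x₀ δ, ∀ z ∈ Metric.ball x₀ δ,
      ∀ h, 0 < h → h < δ → W (z + h • F x) ≤ W z - h * δ) (M : ℝ) :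
    ∃ U : E → ℝ, ContDiff ℝ 2 U ∧ (∀ x, 0 ≤ U x) ∧ (∀ x, W x ≤ c → U x = 0) ∧
      (∀ x, fderiv ℝ U x (F x) ≤ 0) ∧
      ∀ x, c' ≤ W x → W x ≤ d' → fderiv ℝ U x (F x) ≤ -M := by
  set σ := min (c' - c) (d - d') / 4 with hσd
  have hσ : 0 < σ := by
    have : 0 < min (c' - c) (d - d') := lt_min (by linarith) (by linarith)
    positivity
  have hσ1 : 4 * σ ≤ c' - c := by
    have := min_le_left (c' - c) (d - d'); linarith
  have hσ2 : 4 * σ ≤ d - d' := by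
    have := min_le_right (c' - c) (d - d'); linarith
  set w : E → ℝ := fun x => max 0 (d - W x) with hwd
  have hwc : Continuous w := by fun_prop
  have hws : HasCompactSupport w := by
    refine HasCompactSupport.intro hcomp fun x hx => ?_
    simp only [Set.mem_ofPred_eq, not_le] at hx
    exact max_eq_left (by linarith)
  have hCc : IsCompact {x | c ≤ W x ∧ W x ≤ d - σ} := by
    refine hcomp.of_isClosed_subset ((isClosed_le continuous_const hW).inter
      (isClosed_le hW continuous_const)) fun x hx => ?_
    have := hx.2
    simp only [Set.mem_ofPred_eq]; linarith
  obtain ⟨s, hs, hsw, hsF⟩ := mollify (F := F) hwc hws hCc (by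
    rintro x₀ ⟨h1, h2⟩
    obtain ⟨δ, hδ, h⟩ := hdec x₀ h1
    have e1 : {y | W y < d} ∈ 𝓝 x₀ := hW.continuousAt (Iio_mem_nhds (by linarith))
    obtain ⟨ε, hε, he⟩ := Metric.mem_nhds_iff.1 e1
    refine ⟨min δ ε, lt_min hδ hε, fun x hx z hz t ht ht1 => ?_⟩
    have a1 := h x (Metric.ball_subset_ball (min_le_left _ _) hx) z
      (Metric.ball_subset_ball (min_le_left _ _) hz) t ht (ht1.trans_le (min_le_left _ _))
    have a2 : W z < d := he (Metric.ball_subset_ball (min_le_right _ _) hz)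
    have a3 : t * min δ ε ≤ t * δ := mul_le_mul_of_nonneg_left (min_le_left _ _) ht.le
    have a4 := le_max_right 0 (d - W (z + t • F x))
    simp only [hwd]
    rw [max_eq_right (by linarith)]
    linarith) hσ
  have hsd : Differentiable ℝ s := hs.differentiable (by norm_num)
  set A := (d - c - 3 * σ) ^ 3 with hA
  set U : E → ℝ := fun x => (max 0 (A - (max 0 (s x - 2 * σ)) ^ 3)) ^ 3 with hU
  have hUc : ContDiff ℝ 2 U := contDiff_p3.comp
    (contDiff_const.sub (contDiff_p3.comp (hs.sub contDiff_const)))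
  have hUd : ∀ x, fderiv ℝ U x (F x) = - (3 * (max 0 (A - (max 0 (s x - 2 * σ)) ^ 3)) ^ 2 *
      (3 * (max 0 (s x - 2 * σ)) ^ 2) * fderiv ℝ s x (F x)) := by
    intro x
    have a1 := (hasDerivAt_p3 (s x - 2 * σ)).comp_hasFDerivAt x
      ((hsd x).hasFDerivAt.sub_const (2 * σ))
    have a2 := (hasDerivAt_p3 (A - (max 0 (s x - 2 * σ)) ^ 3)).comp_hasFDerivAt x
      (a1.const_sub A)
    have a3 : HasFDerivAt U _ x := a2
    rw [a3.fderiv]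
    simp
    ring
  have hact : ∀ x, 2 * σ < s x → s x < d - c - σ → 0 < fderiv ℝ s x (F x) := by
    intro x h1 h2
    apply hsF
    have h3 := abs_le.1 (hsw x)
    have h4 : σ < w x := by linarith
    have h5 : w x = d - W x := by
      rcases max_cases 0 (d - W x) with h | h
      · exfalso
        have : w x = 0 := h.1
        linarith
      · exact h.1
    constructor <;> linarith
  have hzero : ∀ x, d - c - σ ≤ s x → max 0 (A - (max 0 (s x - 2 * σ)) ^ 3) = 0 := by
    intro x h
    apply max_eq_left
    have : (d - c - 3 * σ) ^ 3 ≤ (max 0 (s x - 2 * σ)) ^ 3 :=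
      pow_le_pow_left₀ (by linarith) ((by linarith : _ ≤ s x - 2 * σ).trans (le_max_right _ _)) 3
    linarith
  have hle : ∀ x, fderiv ℝ U x (F x) ≤ 0 := by
    intro x
    rw [hUd x, neg_nonpos]
    rcases le_or_gt (s x) (2 * σ) with h | h
    · rw [max_eq_left (by linarith : s x - 2 * σ ≤ 0)]; simp
    rcases le_or_gt (d - c - σ) (s x) with h' | h'
    · rw [hzero x h']; simp
    · have := hact x h h'
      positivity
  have hlt : ∀ x ∈ {x | c' ≤ W x ∧ W x ≤ d'}, 0 < - fderiv ℝ U x (F x) := by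
    rintro x ⟨h1, h2⟩
    have h3 := abs_le.1 (hsw x)
    have h5 : w x = d - W x := max_eq_right (by linarith)
    have h6 := hact x (by linarith) (by linarith)
    have h7 : 0 < max 0 (s x - 2 * σ) := lt_max_of_lt_right (by linarith)
    have h8 : 0 < max 0 (A - (max 0 (s x - 2 * σ)) ^ 3) := by
      apply lt_max_of_lt_right
      rw [max_eq_right (by linarith), hA, sub_pos]
      exact pow_lt_pow_left₀ (by linarith) (by linarith) (by norm_num)
    rw [hUd x, neg_neg]
    positivity
  have hcont : Continuous fun x => - fderiv ℝ U x (F x) :=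
    ((hUc.continuous_fderiv (by norm_num)).clm_apply hF).neg
  have hKc : IsCompact {x | c' ≤ W x ∧ W x ≤ d'} := by
    refine hcomp.of_isClosed_subset ((isClosed_le continuous_const hW).inter
      (isClosed_le hW continuous_const)) fun x hx => ?_
    have := hx.2
    simp only [Set.mem_ofPred_eq]; linarith
  obtain ⟨m, hm, hmin⟩ := hKc.exists_forall_le' hcont.continuousOn hlt
  have hUdiff : Differentiable ℝ U := hUc.differentiable (by norm_num)
  have hfd : ∀ x, fderiv ℝ (fun x => (|M| / m) * U x) x (F x) = (|M| / m) * fderiv ℝ U x (F x) := by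
    intro x
    rw [fderiv_const_mul (hUdiff x)]
    simp
  refine ⟨fun x => (|M| / m) * U x, contDiff_const.mul hUc, fun x => ?_, fun x hx => ?_,
    fun x => ?_, fun x h1 h2 => ?_⟩
  · have : 0 ≤ U x := by positivity
    positivity
  · have h3 := abs_le.1 (hsw x)
    have h4 : d - W x ≤ w x := le_max_right _ _
    have := hzero x (by linarith)
    simp only [hU, this]; simp
  · rw [hfd]
    exact mul_nonpos_of_nonneg_of_nonpos (by positivity) (hle x)
  · rw [hfd]
    have h3 := hmin x ⟨h1, h2⟩
    have h4 : |M| / m * m ≤ |M| / m * (- fderiv ℝ U x (F x)) :=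
      mul_le_mul_of_nonneg_left h3 (by positivity)
    rw [div_mul_cancel₀ _ hm.ne'] at h4
    linarith [le_abs_self M]

end MolPart

section ConvPart

variable {E : Type*} [NormedAddCommGroup E] [NormedSpace ℝ E] [FiniteDimensional ℝ E]
  [MeasurableSpace E] [BorelSpace E]

lemma ll_mul {f g : E → ℝ} (hf : LocallyLipschitz f) (hg : LocallyLipschitz g) :
    LocallyLipschitz fun x => f x * g x := by
  have h : LocallyLipschitz fun p : ℝ × ℝ => p.1 * p.2 :=
    ContDiff.locallyLipschitz (𝕂 := ℝ) (contDiff_fst.mul contDiff_snd)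
  exact h.comp (hf.prodMk hg)

lemma ll_apply {G : Type*} [NormedAddCommGroup G] [NormedSpace ℝ G]
    {f : E → (E →L[ℝ] G)} {g : E → E} (hf : LocallyLipschitz f) (hg : LocallyLipschitz g) :
    LocallyLipschitz fun x => f x (g x) := by
  have h : LocallyLipschitz fun p : (E →L[ℝ] G) × E => p.1 p.2 :=
    ContDiff.locallyLipschitz (𝕂 := ℝ) isBoundedBilinearMap_apply.contDiff
  exact h.comp (hf.prodMk hg)

lemma converse {F : E → E} (hF : LocallyLipschitz F) {φ : E → ℝ → E}
    (h0 : ∀ x, φ x 0 = x) (hd : ∀ x t, 0 ≤ t → HasDerivAt (φ x) (F (φ x t)) t)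
    (hlim : ∀ x, Tendsto (φ x) atTop (𝓝 0))
    {q : E → ℝ} (hq : ContDiff ℝ 2 q) (hq0 : q 0 = 0)
    (hqp : Tendsto q (Bornology.cobounded E) atTop) {r₁ : ℝ} (hr₁ : 0 < r₁)
    (hqd : ∀ x, x ≠ 0 → q x ≤ r₁ → fderiv ℝ q x (F x) < 0) :
    ∃ V : E → ℝ, ContDiff ℝ 2 V ∧ (∀ x, q x ≤ V x) ∧ V =ᶠ[𝓝 0] q ∧
      ∀ x, x ≠ 0 → fderiv ℝ V x (F x) < 0 := by
  have : ProperSpace E := FiniteDimensional.proper_real E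
  have hqdiff : Differentiable ℝ q := hq.differentiable (by norm_num)
  set r := r₁ / 2 with hr
  have hr0 : 0 < r := by positivity
  set g : E → ℝ := fun x => 2 * max 0 (q x - r) * (1 + |fderiv ℝ q x (F x)|) with hgdef
  have hqF : LocallyLipschitz fun x => fderiv ℝ q x (F x) := by
    refine ll_apply ?_ hF
    exact ContDiff.locallyLipschitz (𝕂 := ℝ) (hq.fderiv_right (m := 1) (by norm_num))
  have hg : LocallyLipschitz g := by
    refine ll_mul (ll_mul (LocallyLipschitz.const 2) (LocallyLipschitz.const_max ?_ 0)) ?_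
    · exact ContDiff.locallyLipschitz (𝕂 := ℝ) ((hq.of_le (by norm_num)).sub contDiff_const)
    · have h1 : LocallyLipschitz fun y : ℝ => 1 + |y| := by
        have : LipschitzWith 1 fun y : ℝ => 1 + |y| := by
          refine LipschitzWith.of_dist_le_mul fun a b => ?_
          simp only [Real.dist_eq, NNReal.coe_one, one_mul, add_sub_add_left_eq_sub]
          exact abs_abs_sub_abs_le a b
        exact this.locallyLipschitz
      exact h1.comp hqF
  have hgz : ∀ y, q y ≤ r → g y = 0 := by
    intro y hy
    simp only [hgdef]
    rw [max_eq_left (by linarith)]; simp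
  have hgpos : ∀ y, r < q y → 0 < g y := by
    intro y hy
    have : 0 < max 0 (q y - r) := lt_max_of_lt_right (by linarith)
    simp only [hgdef]
    positivity
  have hdec : ∀ x, q x = r → fderiv ℝ q x (F x) < 0 := by
    intro x hx
    refine hqd x ?_ (by linarith)
    rintro rfl
    linarith
  have hent := enter_sub hF h0 hd hlim hqdiff (r := r) (by linarith) hdec
  have hentg : ∀ x₀, ∃ T ≥ 0, ∃ δ > 0, ∀ x ∈ Metric.ball x₀ δ, ∀ t, T ≤ t → g (φ x t) = 0 := by
    intro x₀
    obtain ⟨T, hT, δ, hδ, h⟩ := hent x₀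
    exact ⟨T, hT, δ, hδ, fun x hx t ht => hgz _ (h x hx t ht)⟩
  set W := Wf φ g with hW
  have hWc : Continuous W := by
    rw [continuous_iff_continuousAt]
    intro x₀
    obtain ⟨δ, hδ, L, hL, h⟩ := Wf_lip hF h0 hd hg hentg x₀
    have h3 : Tendsto (fun x => L * ‖x - x₀‖) (𝓝 x₀) (𝓝 0) := by
      have : Continuous fun x => L * ‖x - x₀‖ := by fun_prop
      simpa using this.tendsto x₀
    refine tendsto_iff_dist_tendsto_zero.2 (squeeze_zero' (Eventually.of_forall fun _ => dist_nonneg)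
      ?_ h3)
    filter_upwards [Metric.ball_mem_nhds x₀ hδ] with x hx
    have a1 := h x hx x₀ (Metric.mem_ball_self hδ)
    have a2 := h x₀ (Metric.mem_ball_self hδ) x hx
    rw [norm_sub_rev] at a2
    rw [Real.dist_eq, abs_le]
    constructor <;> linarith
  have hWz : ∀ x, q x ≤ r → W x = 0 := by
    intro x hx
    rw [hW, Wf_eq φ g x 0 le_rfl (fun t ht => hgz _ (inv_sub h0 hd hqdiff hdec x hx t ht))]
    simp
  have hWge : ∀ x, (max 0 (q x - r)) ^ 2 ≤ W x := by
    intro x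
    refine Wf_ge hF.continuous h0 hd hq hg.continuous (fun y => ?_) x ?_ hgz
    · simp only [hgdef]
      have a1 : 0 ≤ max 0 (q y - r) := le_max_left _ _
      have a2 := neg_abs_le (fderiv ℝ q y (F y))
      nlinarith
    · obtain ⟨T, hT, δ, hδ, h⟩ := hent x
      exact ⟨T, hT, h x (Metric.mem_ball_self hδ)⟩
  have hcomp : ∀ d, IsCompact {x | W x ≤ d} := by
    intro d
    refine Metric.isCompact_of_isClosed_isBounded (isClosed_le hWc continuous_const) ?_
    rw [Bornology.isBounded_def]
    filter_upwards [hqp.eventually_gt_atTop (r + |d| + 1)] with x hx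
    simp only [Set.mem_compl_iff, Set.mem_ofPred_eq, not_le]
    have h1 := hWge x
    rw [max_eq_right (by linarith [abs_nonneg d])] at h1
    nlinarith [abs_nonneg d, le_abs_self d]
  set m := r ^ 2 / 2 with hm
  have hm0 : 0 < m := by positivity
  have hstep : ∀ k : ℕ, ∃ U : E → ℝ, ContDiff ℝ 2 U ∧ (∀ x, 0 ≤ U x) ∧
      (∀ x, W x ≤ (k + 1) * m → U x = 0) ∧ (∀ x, fderiv ℝ U x (F x) ≤ 0) ∧
      ∀ x, (k + 2) * m ≤ W x → W x ≤ (k + 3) * m →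
        fderiv ℝ q x (F x) + fderiv ℝ U x (F x) < 0 := by
    intro k
    obtain ⟨M, hM⟩ := (hcomp ((k + 3) * m)).exists_bound_of_continuousOn
      hqF.continuous.continuousOn
    obtain ⟨U, h1, h2, h3, h4, h5⟩ := stepC hF.continuous hWc (c := (k + 1) * m)
      (c' := (k + 2) * m) (d' := (k + 3) * m) (d := (k + 4) * m) (by nlinarith) (by nlinarith)
      (by nlinarith) (hcomp _) (fun x₀ hx₀ => by
        refine Wf_dec hF h0 hd hg hentg x₀ (hgpos x₀ ?_)
        by_contra hc
        rw [hWz x₀ (not_lt.1 hc)] at hx₀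
        have : 0 < ((k:ℝ) + 1) * m := by positivity
        linarith) (M + 1)
    refine ⟨U, h1, h2, h3, h4, fun x a1 a2 => ?_⟩
    have a3 := hM x a2
    rw [Real.norm_eq_abs] at a3
    linarith [h5 x a1 a2, le_abs_self (fderiv ℝ q x (F x))]
  choose U hUc hUnn hUz hUle hUlt using hstep
  set V : E → ℝ := fun x => q x + ∑' k, U k x with hV
  have hloc : ∀ x₀, ∀ K : ℕ, W x₀ < K * m →
      V =ᶠ[𝓝 x₀] fun x => q x + ∑ k ∈ Finset.range K, U k x := by
    intro x₀ K hK
    filter_upwards [hWc.continuousAt (Iio_mem_nhds hK)] with x hx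
    have hx' : W x < K * m := hx
    simp only [hV]
    rw [tsum_eq_sum (s := Finset.range K)]
    intro k hk
    rw [Finset.mem_range, not_lt] at hk
    apply hUz
    have : (K : ℝ) ≤ k := by exact_mod_cast hk
    nlinarith
  have hex : ∀ x₀ : E, ∃ K : ℕ, W x₀ < K * m := by
    intro x₀
    obtain ⟨K, hK⟩ := exists_nat_gt (W x₀ / m)
    exact ⟨K, (div_lt_iff₀ hm0).1 hK⟩
  have hUdiff : ∀ k, Differentiable ℝ (U k) := fun k => (hUc k).differentiable (by norm_num)
  refine ⟨V, ?_, ?_, ?_, ?_⟩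
  · rw [contDiff_iff_contDiffAt]
    intro x₀
    obtain ⟨K, hK⟩ := hex x₀
    refine ContDiffAt.congr_of_eventuallyEq ?_ (hloc x₀ K hK)
    exact (hq.add (ContDiff.sum fun k _ => hUc k)).contDiffAt
  · intro x
    have : 0 ≤ ∑' k, U k x := tsum_nonneg fun k => hUnn k x
    simp only [hV]; linarith
  · have hW0 : W 0 < ((1:ℕ):ℝ) * m := by
      rw [hWz 0 (by linarith)]; simpa using hm0
    filter_upwards [hloc 0 1 hW0, hWc.continuousAt (Iio_mem_nhds hW0)] with x hx hx2
    rw [hx]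
    have hx3 : W x < ((1:ℕ):ℝ) * m := hx2
    have := hUz 0 x (by push_cast at hx3 ⊢; linarith)
    simp [this]
  · intro x hx
    obtain ⟨K, hK⟩ := hex x
    rw [(hloc x K hK).fderiv_eq]
    have hsum : DifferentiableAt ℝ (fun x => ∑ k ∈ Finset.range K, U k x) x :=
      DifferentiableAt.fun_sum fun k _ => hUdiff k x
    rw [fderiv_fun_add (hqdiff x) hsum, fderiv_fun_sum fun k _ => hUdiff k x]
    simp only [ContinuousLinearMap.add_apply, ContinuousLinearMap.sum_apply]
    rcases lt_or_ge (W x) (2 * m) with h | h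
    · have h1 : q x ≤ r₁ := by
        by_contra hc
        have h2 := hWge x
        rw [max_eq_right (by linarith)] at h2
        nlinarith
      have h2 : ∑ k ∈ Finset.range K, fderiv ℝ (U k) x (F x) ≤ 0 :=
        Finset.sum_nonpos fun k _ => hUle k x
      linarith [hqd x hx h1]
    · have hpos : 0 ≤ W x / m - 2 := by
        rw [sub_nonneg, le_div_iff₀ hm0]; linarith
      set j := ⌊W x / m - 2⌋₊ with hj
      have j1 := Nat.floor_le hpos
      have j2 := Nat.lt_floor_add_one (W x / m - 2)
      rw [← hj] at j1 j2
      have hWm : W x / m * m = W x := div_mul_cancel₀ _ hm0.ne'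
      have j3 : ((j:ℝ) + 2) * m ≤ W x := by nlinarith
      have j4 : W x ≤ ((j:ℝ) + 3) * m := by nlinarith
      have jK : j ∈ Finset.range K := by
        rw [Finset.mem_range]
        have : (j:ℝ) < K := by
          by_contra hc
          have : (K:ℝ) ≤ j := not_lt.1 hc
          nlinarith
        exact_mod_cast this
      rw [← Finset.add_sum_erase _ _ jK]
      have h2 : ∑ k ∈ (Finset.range K).erase j, fderiv ℝ (U k) x (F x) ≤ 0 :=
        Finset.sum_nonpos fun k _ => hUle k x
      linarith [hUlt j x j3 j4]

end ConvPart

section LyapPart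

open scoped Matrix.Norms.L2Operator in
lemma schur_pow {n : ℕ} [NeZero n] (S : Matrix (Fin n) (Fin n) ℂ)
    (hS : ∀ z ∈ spectrum ℂ S, ‖z‖ < 1) : ∃ N : ℕ, 1 ≤ N ∧ ‖S ^ N‖ < 1 := by
  have h1 : spectralRadius ℂ S < ((1 : NNReal) : ENNReal) :=
    spectrum.spectralRadius_lt_of_forall_lt S (fun z hz => by exact_mod_cast hS z hz)
  have h2 := spectrum.pow_nnnorm_pow_one_div_tendsto_nhds_spectralRadius S
  have h3 := (h2.eventually (gt_mem_nhds h1)).and (eventually_ge_atTop 1)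
  obtain ⟨N, hN, hN1⟩ := h3.exists
  refine ⟨N, hN1, ?_⟩
  by_contra hc
  push Not at hc
  have h4 : (1 : ENNReal) ≤ (‖S ^ N‖₊ : ENNReal) := by exact_mod_cast hc
  have h5 : (1 : ENNReal) ≤ (‖S ^ N‖₊ : ENNReal) ^ (1 / N : ℝ) :=
    ENNReal.one_le_rpow h4 (by positivity)
  exact absurd hN (not_lt.mpr (by simpa using h5))

open scoped Matrix.Norms.L2Operator in
lemma real_contr {n : ℕ} (T : Matrix (Fin n) (Fin n) ℝ)
    (hT : ‖T.map (algebraMap ℝ ℂ)‖ < 1) (x : Fin n → ℝ) (hx : x ≠ 0) :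
    (T *ᵥ x) ⬝ᵥ (T *ᵥ x) < x ⬝ᵥ x := by
  have key : ∀ y : Fin n → ℝ, y ⬝ᵥ y = ‖WithLp.toLp 2 (fun i => (y i : ℂ))‖ ^ 2 := by
    intro y
    rw [EuclideanSpace.norm_sq_eq]
    simp [dotProduct, sq]
  have h1 := Matrix.l2_opNorm_mulVec (T.map (algebraMap ℝ ℂ)) (WithLp.toLp 2 (fun i => (x i : ℂ)))
  have h2 : (T.map (algebraMap ℝ ℂ)) *ᵥ (fun i => (x i : ℂ)) = fun i => (((T *ᵥ x) i : ℝ) : ℂ) := by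
    ext i
    simp [Matrix.mulVec, dotProduct]
  have hpos : 0 < x ⬝ᵥ x := by
    have := Matrix.dotProduct_star_self_pos_iff (v := x)
    simpa using this.mpr hx
  rw [key] at hpos
  rw [key, key]
  have hxp : 0 < ‖WithLp.toLp 2 (fun i => (x i : ℂ))‖ := by
    rcases (norm_nonneg (WithLp.toLp 2 (fun i => (x i : ℂ)))).eq_or_lt with h | h
    · rw [← h] at hpos; simp at hpos
    · exact h
  have h1' : ‖WithLp.toLp 2 (fun i => (((T *ᵥ x) i : ℝ) : ℂ))‖
      ≤ ‖T.map (algebraMap ℝ ℂ)‖ * ‖WithLp.toLp 2 (fun i => (x i : ℂ))‖ := by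
    rw [← h2]; exact h1
  have h3 : ‖WithLp.toLp 2 (fun i => (((T *ᵥ x) i : ℝ) : ℂ))‖ < ‖WithLp.toLp 2 (fun i => (x i : ℂ))‖ := by
    nlinarith
  gcongr

lemma exists_step {s : Set ℂ} (hs : s.Finite) (h : ∀ z ∈ s, z.re < 0) :
    ∃ ε : ℝ, 0 < ε ∧ ∀ z ∈ s, ‖1 + (ε : ℂ) * z‖ < 1 := by
  have : ∀ᶠ ε : ℝ in 𝓝[>] 0, ∀ z ∈ s, ‖1 + (ε : ℂ) * z‖ < 1 := by
    rw [Filter.eventually_all_finite hs]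
    intro z hz
    have hz' := h z hz
    have hc : ∀ᶠ ε : ℝ in 𝓝[>] 0, ε * (z.re ^ 2 + z.im ^ 2) < - 2 * z.re := by
      apply nhdsWithin_le_nhds
      have : Tendsto (fun ε : ℝ => ε * (z.re ^ 2 + z.im ^ 2)) (𝓝 0) (𝓝 (0 * (z.re ^ 2 + z.im ^ 2))) :=
        (continuous_id.mul continuous_const).tendsto _
      exact this.eventually (gt_mem_nhds (by linarith))
    filter_upwards [hc, self_mem_nhdsWithin] with ε h1 h2
    have h2 : 0 < ε := h2
    rw [← sq_lt_one_iff₀ (norm_nonneg _), ← Complex.normSq_eq_norm_sq, Complex.normSq_apply]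
    simp
    nlinarith
  obtain ⟨ε, h1, h2⟩ := (this.and self_mem_nhdsWithin).exists
  exact ⟨ε, h2, h1⟩

lemma spec_step {n : ℕ} (M : Matrix (Fin n) (Fin n) ℂ) {ε : ℝ} (hε : 0 < ε)
    (h : ∀ z ∈ spectrum ℂ M, ‖1 + (ε : ℂ) * z‖ < 1) :
    ∀ z ∈ spectrum ℂ (1 + (ε : ℂ) • M), ‖z‖ < 1 := by
  intro z hz
  have hε' : (ε : ℂ) ≠ 0 := by exact_mod_cast hε.ne'
  have h1 : (z - 1) / ε ∈ spectrum ℂ M := by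
    rw [spectrum.mem_iff] at hz ⊢
    intro hu
    apply hz
    have : (algebraMap ℂ (Matrix (Fin n) (Fin n) ℂ)) z - (1 + (ε : ℂ) • M)
        = (Units.mk0 (ε : ℂ) hε') • ((algebraMap ℂ (Matrix (Fin n) (Fin n) ℂ)) ((z - 1) / ε) - M) := by
      rw [Units.smul_def, Units.val_mk0, smul_sub, Algebra.algebraMap_eq_smul_one,
        Algebra.algebraMap_eq_smul_one, smul_smul, mul_div_cancel₀ _ hε', sub_smul, one_smul]
      abel
    rw [this]
    exact hu.smul _
  have := h _ h1
  rwa [mul_div_cancel₀ _ hε', add_sub_cancel] at this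

lemma quad_conj {n : ℕ} (T Q : Matrix (Fin n) (Fin n) ℝ) (x : Fin n → ℝ) :
    x ⬝ᵥ ((Tᵀ * Q * T) *ᵥ x) = (T *ᵥ x) ⬝ᵥ (Q *ᵥ (T *ᵥ x)) := by
  rw [← Matrix.mulVec_mulVec, ← Matrix.mulVec_mulVec, Matrix.dotProduct_mulVec, Matrix.vecMul_transpose]

lemma lyap {n : ℕ} (M : Matrix (Fin n) (Fin n) ℝ) (hM : Hurwitz M) :
    ∃ Q : Matrix (Fin n) (Fin n) ℝ, Q.PosDef ∧ (-(Mᵀ * Q + Q * M)).PosDef := by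
  rcases Nat.eq_zero_or_pos n with hn | hn
  · subst hn
    refine ⟨1, Matrix.PosDef.one, ?_⟩
    have : (-(Mᵀ * 1 + 1 * M)) = 1 := Subsingleton.elim _ _
    rw [this]; exact Matrix.PosDef.one
  have : NeZero n := ⟨hn.ne'⟩
  obtain ⟨ε, hε, hs⟩ := exists_step (Matrix.finite_spectrum (M.map (algebraMap ℝ ℂ))) hM
  obtain ⟨N, hN1, hN⟩ := schur_pow _ (spec_step _ hε hs)
  set S : Matrix (Fin n) (Fin n) ℝ := 1 + ε • M with hSdef
  have hSmap : (S ^ N).map (algebraMap ℝ ℂ) = (1 + (ε : ℂ) • M.map (algebraMap ℝ ℂ)) ^ N := by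
    have h1 : (S ^ N).map (algebraMap ℝ ℂ) = (algebraMap ℝ ℂ).mapMatrix (S ^ N) := rfl
    rw [h1, map_pow]
    congr 1
    rw [hSdef, map_add, map_one]
    congr 1
    ext i j
    simp
  have hcontr := real_contr (S ^ N) (by rw [hSmap]; exact hN)
  set Q : Matrix (Fin n) (Fin n) ℝ := ∑ k ∈ Finset.range N, (S ^ k)ᵀ * S ^ k with hQdef
  have hQs : Qᵀ = Q := by
    rw [hQdef, Matrix.transpose_sum]
    simp
  have hquad : ∀ x : Fin n → ℝ, x ⬝ᵥ (Q *ᵥ x) = ∑ k ∈ Finset.range N, ((S ^ k) *ᵥ x) ⬝ᵥ ((S ^ k) *ᵥ x) := by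
    intro x
    rw [hQdef, Matrix.sum_mulVec, dotProduct_sum]
    refine Finset.sum_congr rfl fun k _ => ?_
    have := quad_conj (S ^ k) 1 x
    simpa using this
  have hnn : ∀ y : Fin n → ℝ, 0 ≤ y ⬝ᵥ y := fun y => by
    exact Finset.sum_nonneg fun i _ => mul_self_nonneg _
  have hQpos : ∀ x : Fin n → ℝ, x ≠ 0 → 0 < x ⬝ᵥ (Q *ᵥ x) := by
    intro x hx
    rw [hquad]
    refine Finset.sum_pos' (fun k _ => hnn _) ⟨0, Finset.mem_range.mpr hN1, ?_⟩
    have := Matrix.dotProduct_star_self_pos_iff (v := x)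
    simpa using this.mpr hx
  have htel : ∀ x : Fin n → ℝ, x ⬝ᵥ ((Sᵀ * Q * S) *ᵥ x) - x ⬝ᵥ (Q *ᵥ x)
      = ((S ^ N) *ᵥ x) ⬝ᵥ ((S ^ N) *ᵥ x) - x ⬝ᵥ x := by
    intro x
    rw [quad_conj, hquad, hquad]
    have : ∀ k, (S ^ k) *ᵥ (S *ᵥ x) = (S ^ (k + 1)) *ᵥ x := fun k => by
      rw [Matrix.mulVec_mulVec, pow_succ]
    simp only [this]
    rw [← Finset.sum_sub_distrib, Finset.sum_range_sub (fun k => ((S ^ k) *ᵥ x) ⬝ᵥ ((S ^ k) *ᵥ x))]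
    simp
  have hexp : Sᵀ * Q * S = Q + ε • (Mᵀ * Q + Q * M) + (ε * ε) • (Mᵀ * Q * M) := by
    rw [hSdef]
    simp only [Matrix.transpose_add, Matrix.transpose_one, Matrix.transpose_smul, add_mul, mul_add, one_mul, mul_one, Matrix.smul_mul, Matrix.mul_smul, smul_add, smul_smul]
    abel
  refine ⟨Q, ?_, ?_⟩
  · refine Matrix.PosDef.of_dotProduct_mulVec_pos ?_ ?_
    · rw [Matrix.IsHermitian, Matrix.conjTranspose_eq_transpose_of_trivial]; exact hQs
    · intro x hx; simpa using hQpos x hx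
  · refine Matrix.PosDef.of_dotProduct_mulVec_pos ?_ ?_
    · rw [Matrix.IsHermitian, Matrix.conjTranspose_eq_transpose_of_trivial]
      simp [hQs, add_comm]
    · intro x hx
      have h1 := htel x
      have h2 := hcontr x hx
      have h3 : 0 ≤ x ⬝ᵥ ((Mᵀ * Q * M) *ᵥ x) := by
        rw [quad_conj, hquad]; exact Finset.sum_nonneg fun k _ => hnn _
      rw [hexp, Matrix.add_mulVec, Matrix.add_mulVec, dotProduct_add, dotProduct_add,
        Matrix.smul_mulVec, Matrix.smul_mulVec, dotProduct_smul, dotProduct_smul, smul_eq_mul, smul_eq_mul] at h1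
      have h4 : ε * (x ⬝ᵥ ((Mᵀ * Q + Q * M) *ᵥ x)) < 0 := by
        have := mul_nonneg (mul_pos hε hε).le h3
        linarith
      have h5 : x ⬝ᵥ ((Mᵀ * Q + Q * M) *ᵥ x) < 0 := by
        by_contra hc
        push Not at hc
        have := mul_nonneg hε.le hc
        linarith
      rw [Matrix.neg_mulVec, dotProduct_neg]
      simpa using h5

end LyapPart

section FinalPart

lemma quad_lower {n : ℕ} (R : Matrix (Fin n) (Fin n) ℝ) (hR : R.PosDef) :
    ∃ c : ℝ, 0 < c ∧ ∀ x : Fin n → ℝ, c * ‖x‖ ^ 2 ≤ x ⬝ᵥ (R *ᵥ x) := by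
  have hpos : ∀ x : Fin n → ℝ, x ≠ 0 → 0 < x ⬝ᵥ (R *ᵥ x) := fun x hx => by
    simpa using hR.dotProduct_mulVec_pos hx
  have hcont : Continuous fun x : Fin n → ℝ => x ⬝ᵥ (R *ᵥ x) := by
    fun_prop
  have hmain : ∃ c : ℝ, 0 < c ∧ ∀ x ∈ Metric.sphere (0 : Fin n → ℝ) 1, c ≤ x ⬝ᵥ (R *ᵥ x) := by
    rcases (Metric.sphere (0 : Fin n → ℝ) 1).eq_empty_or_nonempty with h | h
    · exact ⟨1, one_pos, by simp [h]⟩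
    · obtain ⟨y, hy, hmin⟩ := (isCompact_sphere (0 : Fin n → ℝ) 1).exists_isMinOn h hcont.continuousOn
      refine ⟨_, hpos y ?_, fun x hx => hmin hx⟩
      rintro rfl
      simp at hy
  obtain ⟨c, hc, h⟩ := hmain
  refine ⟨c, hc, fun x => ?_⟩
  by_cases hx : x = 0
  · simp [hx]
  have hn : 0 < ‖x‖ := norm_pos_iff.mpr hx
  have h1 := h (‖x‖⁻¹ • x) (by simp [norm_smul, hn.ne'])
  rw [Matrix.mulVec_smul, smul_dotProduct, dotProduct_smul, smul_eq_mul, smul_eq_mul] at h1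
  have h2 : c * ‖x‖ ^ 2 ≤ (‖x‖⁻¹ * (‖x‖⁻¹ * (x ⬝ᵥ (R *ᵥ x)))) * ‖x‖ ^ 2 := by gcongr
  calc _ ≤ _ := h2
    _ = _ := by field_simp

lemma field_aux {n p : ℕ}
    (a : (Fin n → ℝ) → (Fin n → ℝ)) (b : (Fin n → ℝ) → Fin n → Fin p → ℝ)
    (A : Matrix (Fin n) (Fin n) ℝ) (B : Matrix (Fin n) (Fin p) ℝ)
    (K : Matrix (Fin p) (Fin n) ℝ)
    (ha : ContDiff ℝ 1 a) (hA : ∀ v, fderiv ℝ a 0 v = A.mulVec v)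
    (hb : ContDiff ℝ 1 b) (hB : B = Matrix.of (b 0))
    (α₀ : (Fin n → ℝ) → (Fin p → ℝ))
    (hα_lip : LocallyLipschitz α₀) (hα_diff : DifferentiableAt ℝ α₀ 0)
    (hα0 : α₀ 0 = 0) (hαK : ∀ v, fderiv ℝ α₀ 0 v = K.mulVec v) :
    LocallyLipschitz (fun χ => a χ + (Matrix.of (b χ)).mulVec (α₀ χ)) ∧
    ∃ D : (Fin n → ℝ) →L[ℝ] (Fin n → ℝ), (∀ v, D v = (A + B * K) *ᵥ v) ∧
      HasFDerivAt (fun χ => a χ + (Matrix.of (b χ)).mulVec (α₀ χ)) D 0 := by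
  let bm : (Fin n → Fin p → ℝ) →L[ℝ] (Fin p → ℝ) →L[ℝ] (Fin n → ℝ) :=
    LinearMap.toContinuousBilinearMap
      (LinearMap.mk₂ ℝ (fun (m : Fin n → Fin p → ℝ) (u : Fin p → ℝ) => (Matrix.of m) *ᵥ u)
        (fun m m' u => by rw [← Matrix.add_mulVec]; rfl)
        (fun c m u => by rw [← Matrix.smul_mulVec]; rfl)
        (fun m u u' => Matrix.mulVec_add _ _ _)
        (fun c m u => Matrix.mulVec_smul _ _ _))
  have hbm : ∀ m u, bm m u = (Matrix.of m) *ᵥ u := fun m u => rfl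
  have hF : (fun χ => a χ + (Matrix.of (b χ)).mulVec (α₀ χ)) = fun χ => a χ + bm (b χ) (α₀ χ) := rfl
  rw [hF]
  constructor
  · have h : LocallyLipschitz fun z : (Fin n → ℝ) × (Fin p → ℝ) => a z.1 + bm (b z.1) z.2 := by
      refine ContDiff.locallyLipschitz (𝕂 := ℝ) ?_
      refine (ha.comp contDiff_fst).add ?_
      exact bm.isBoundedBilinearMap.contDiff.comp ((hb.comp contDiff_fst).prodMk contDiff_snd)
    exact h.comp (LocallyLipschitz.id.prodMk hα_lip)
  · have h1 := (ha.differentiable one_ne_zero 0).hasFDerivAt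
    have h2 := (hb.differentiable one_ne_zero 0).hasFDerivAt
    have h3 := hα_diff.hasFDerivAt
    refine ⟨_, ?_, h1.add (bm.hasFDerivAt_of_bilinear h2 h3)⟩
    intro v
    simp [hA, hαK, hα0, hbm, hB, Matrix.add_mulVec]

end FinalPart


set_option maxHeartbeats 2000000

/-- If a locally Lipschitz feedback `α₀`, differentiable at `0` with
`α₀ 0 = 0` and `Dα₀(0) = K` (where `A + BK` is Hurwitz), globally asymptotically
stabilizes the origin of `χ' = a χ + b χ · α₀ χ`, then there is a `C²` proper positive
definite function `V` such that, with `P := ½ H(V)(0)`, `P` is positive definite,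
`(A+BK)ᵀP + P(A+BK)` is negative definite, and the Artstein condition holds. -/
theorem stmt0 {n p : ℕ}
    (a : (Fin n → ℝ) → (Fin n → ℝ)) (b : (Fin n → ℝ) → Fin n → Fin p → ℝ)
    (A : Matrix (Fin n) (Fin n) ℝ) (B : Matrix (Fin n) (Fin p) ℝ)
    (K : Matrix (Fin p) (Fin n) ℝ)
    (ha : ContDiff ℝ 1 a) (ha0 : a 0 = 0)
    (hA : ∀ v, fderiv ℝ a 0 v = A.mulVec v)
    (hb : ContDiff ℝ 1 b) (hB : B = Matrix.of (b 0))
    (hHurwitz : Hurwitz (A + B * K))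
    (α₀ : (Fin n → ℝ) → (Fin p → ℝ))
    (hα_lip : LocallyLipschitz α₀) (hα_diff : DifferentiableAt ℝ α₀ 0)
    (hα0 : α₀ 0 = 0) (hαK : ∀ v, fderiv ℝ α₀ 0 v = K.mulVec v)
    (hGAS : IsGAS fun χ => a χ + (Matrix.of (b χ)).mulVec (α₀ χ)) :
    ∃ V : (Fin n → ℝ) → ℝ, ContDiff ℝ 2 V ∧ (∀ χ, 0 ≤ V χ) ∧ IsProper V ∧ IsPosDefFn V ∧
      (((1:ℝ)/2) • hessianAt V 0).PosDef ∧
      (-((A + B * K)ᵀ * (((1:ℝ)/2) • hessianAt V 0)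
          + (((1:ℝ)/2) • hessianAt V 0) * (A + B * K))).PosDef ∧
      (∀ χ : Fin n → ℝ, χ ≠ 0 →
        (∀ i, fderiv ℝ V χ (fun k => b χ k i) = 0) → fderiv ℝ V χ (a χ) < 0) := by
  obtain ⟨hF, D, hD, hFD⟩ := field_aux a b A B K ha hA hb hB α₀ hα_lip hα_diff hα0 hαK
  obtain ⟨Q, hQ, hL⟩ := lyap _ hHurwitz
  set M := A + B * K with hM
  set F : (Fin n → ℝ) → (Fin n → ℝ) := fun χ => a χ + (Matrix.of (b χ)).mulVec (α₀ χ) with hFdef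
  clear_value M F
  have hF0 : F 0 = 0 := by simp [hFdef, ha0, hα0]
  obtain ⟨c, hc, hqc⟩ := quad_lower Q hQ
  obtain ⟨c', hc', hqc'⟩ := quad_lower _ hL
  have hQs : Qᵀ = Q := by
    have := hQ.isHermitian
    rwa [Matrix.IsHermitian, Matrix.conjTranspose_eq_transpose_of_trivial] at this
  obtain ⟨Lb, hLb⟩ : ∃ Lb : (Fin n → ℝ) →L[ℝ] (Fin n → ℝ) →L[ℝ] ℝ,
      ∀ x y, Lb x y = x ⬝ᵥ (Q *ᵥ y) :=
    ⟨LinearMap.toContinuousBilinearMap (Matrix.toBilin' Q), fun x y => Matrix.toBilin'_apply' Q x y⟩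
  let q : (Fin n → ℝ) → ℝ := fun x => Lb x x
  have hqv : ∀ x, c * ‖x‖ ^ 2 ≤ q x := fun x => (hqc x).trans_eq (hLb x x).symm
  let G : (Fin n → ℝ) →L[ℝ] (Fin n → ℝ) →L[ℝ] ℝ := Lb + Lb.flip
  have hqder : ∀ x, HasFDerivAt q (G x) x := by
    intro x
    have h := Lb.hasFDerivAt_of_bilinear (hasFDerivAt_id x) (hasFDerivAt_id x)
    refine h.congr_fderiv ?_
    ext v
    simp [G]
  have hqfd : fderiv ℝ q = G := funext fun x => (hqder x).fderiv
  have hq2 : ContDiff ℝ 2 q :=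
    Lb.isBoundedBilinearMap.contDiff.comp (contDiff_id.prodMk contDiff_id)
  have hq0 : q 0 = 0 := by simp [q]
  have hqp : Tendsto q (Bornology.cobounded (Fin n → ℝ)) atTop := by
    refine tendsto_atTop_mono hqv ?_
    exact ((tendsto_pow_atTop two_ne_zero).comp tendsto_norm_cobounded_atTop).const_mul_atTop hc
  have hGM : ∀ x, G x (M *ᵥ x) ≤ - (c' * ‖x‖ ^ 2) := by
    intro x
    have h := hqc' x
    have e : G x (M *ᵥ x) = x ⬝ᵥ ((Mᵀ * Q + Q * M) *ᵥ x) := by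
      have : G x (M *ᵥ x) = Lb x (M *ᵥ x) + Lb (M *ᵥ x) x := rfl
      rw [this, hLb, hLb, Matrix.add_mulVec, dotProduct_add, ← Matrix.mulVec_mulVec,
        ← Matrix.mulVec_mulVec, Matrix.dotProduct_mulVec x Mᵀ, Matrix.vecMul_transpose, add_comm]
    rw [Matrix.neg_mulVec, dotProduct_neg, ← e] at h
    linarith
  have hloc : ∃ r₁ : ℝ, 0 < r₁ ∧ ∀ x, x ≠ 0 → q x ≤ r₁ → fderiv ℝ q x (F x) < 0 := by
    have hε : 0 < c' / (2 * (‖G‖ + 1)) := by positivity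
    have ho := (hasFDerivAt_iff_isLittleO_nhds_zero.mp hFD).def hε
    obtain ⟨δ, hδ, hball⟩ := Metric.eventually_nhds_iff.mp ho
    refine ⟨c * (δ / 2) ^ 2, by positivity, ?_⟩
    intro x hx hqx
    have hxn : 0 < ‖x‖ := norm_pos_iff.mpr hx
    have hxδ : ‖x‖ < δ := by
      have h1 : c * ‖x‖ ^ 2 ≤ c * (δ / 2) ^ 2 := (hqv x).trans hqx
      have h2 : ‖x‖ ^ 2 ≤ (δ / 2) ^ 2 := le_of_mul_le_mul_left h1 hc
      have h3 : ‖x‖ ≤ δ / 2 := (sq_le_sq₀ hxn.le (by positivity)).mp h2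
      linarith
    have hb1 := hball (y := x) (by simpa using hxδ)
    have hb2 : ‖F x - M *ᵥ x‖ ≤ c' / (2 * (‖G‖ + 1)) * ‖x‖ := by
      have e : F (0 + x) - F 0 - D x = F x - M *ᵥ x := by rw [hF0, hD, zero_add, sub_zero]
      rw [← e]; exact hb1
    rw [hqfd]
    have e1 : G x (F x) = G x (M *ᵥ x) + G x (F x - M *ᵥ x) := by
      rw [← map_add]; congr 1; abel
    have h5 : G x (F x - M *ᵥ x) ≤ ‖G‖ * ‖x‖ * (c' / (2 * (‖G‖ + 1)) * ‖x‖) := by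
      refine (le_abs_self _).trans ?_
      rw [← Real.norm_eq_abs]
      exact (G.le_opNorm₂ x _).trans (by gcongr)
    have h6 : ‖G‖ * ‖x‖ * (c' / (2 * (‖G‖ + 1)) * ‖x‖) ≤ c' / 2 * ‖x‖ ^ 2 := by
      have h7 : ‖G‖ / (‖G‖ + 1) ≤ 1 := by
        rw [div_le_one (by positivity)]; linarith
      calc ‖G‖ * ‖x‖ * (c' / (2 * (‖G‖ + 1)) * ‖x‖)
          = (‖G‖ / (‖G‖ + 1)) * (c' / 2 * ‖x‖ ^ 2) := by field_simp
        _ ≤ 1 * (c' / 2 * ‖x‖ ^ 2) := by gcongr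
        _ = _ := one_mul _
    have h8 := hGM x
    have h9 : 0 < c' * ‖x‖ ^ 2 := by positivity
    linarith
  obtain ⟨r₁, hr₁, hqd⟩ := hloc
  choose φ hφ0 hφd hφl using hGAS.2
  obtain ⟨V, hV2, hVq, hVe, hVd⟩ := converse hF hφ0 hφd hφl hq2 hq0 hqp hr₁ hqd
  have hHess : ((1:ℝ)/2) • hessianAt V 0 = Q := by
    ext i j
    have h1 : iteratedFDeriv ℝ 2 V 0 = iteratedFDeriv ℝ 2 q 0 :=
      (Filter.EventuallyEq.iteratedFDeriv ℝ hVe 2).self_of_nhds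
    have h2 : fderiv ℝ (fderiv ℝ q) 0 = G := by
      rw [hqfd]; exact G.fderiv
    have h3 : hessianAt V 0 i j = Q i j + Q j i := by
      simp only [hessianAt, Matrix.of_apply]
      rw [h1, iteratedFDeriv_two_apply, h2]
      have : G (Pi.single i 1) (Pi.single j 1)
        = Lb (Pi.single i 1) (Pi.single j 1) + Lb (Pi.single j 1) (Pi.single i 1) := rfl
      simp only [Matrix.cons_val_zero, Matrix.cons_val_one]
      rw [this, hLb, hLb]
      simp
    have h4 : Q j i = Q i j := congrFun (congrFun hQs i) j
    rw [Matrix.smul_apply, h3, h4, smul_eq_mul]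
    ring
  have hV0 : V 0 = 0 := by rw [hVe.self_of_nhds, hq0]
  refine ⟨V, hV2, fun x => ?_, tendsto_atTop_mono hVq hqp, ⟨hV0, fun x hx => ?_⟩, ?_, ?_, ?_⟩
  · exact le_trans (by positivity) ((hqv x).trans (hVq x))
  · have : 0 < ‖x‖ := norm_pos_iff.mpr hx
    exact lt_of_lt_of_le (by positivity) ((hqv x).trans (hVq x))
  · rw [hHess]; exact hQ
  · rw [hHess]; exact hL
  · intro χ hχ hz
    have h := hVd χ hχ
    have e : (Matrix.of (b χ)).mulVec (α₀ χ) = ∑ i, α₀ χ i • (fun k => b χ k i) := by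
      ext k
      simp [Matrix.mulVec, dotProduct, mul_comm]
    have h0 : fderiv ℝ V χ ((Matrix.of (b χ)).mulVec (α₀ χ)) = 0 := by
      rw [e, map_sum]
      exact Finset.sum_eq_zero fun i _ => by rw [map_smul, hz i, smul_zero]
    have : fderiv ℝ V χ (F χ) = fderiv ℝ V χ (a χ) := by
      rw [congrFun hFdef χ]
      simp only [map_add, h0, add_zero]
    rwa [this] at h
end
end

section
/- Let K ∈ ℝ^{p×n} be such that A + BK is Hurwitz. Suppose there exists a C² proper positive definite function V: ℝ^n → ℝ≥0 such that, with P := (1/2)·H(V)(0): (i) P is positive definite and (A + BK)ᵀP + P(A + BK) is negative definite; and (ii) for every χ ∈ ℝ^n \ {0}, L_bV(χ) = 0 implies L_aV(χ) < 0. Then there exists a locally Lipschitz map α₀: ℝ^n → ℝ^p, differentiable at 0 with α₀(0) = 0 and Dα₀(0) = K, such that the origin of dχ/dt = a(χ) + b(χ)α₀(χ) is globally asymptotically stable; moreover α₀ can be chosen so that ∇V(χ)·(a(χ) + b(χ)α₀(χ)) < 0 for all χ ≠ 0. -/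
open Matrix Filter Topology Asymptotics

noncomputable section

lemma global_ode {E : Type*} [NormedAddCommGroup E] [NormedSpace ℝ E] [CompleteSpace E]
    (G : E → E) (K L : NNReal) (hK : LipschitzWith K G) (hL : ∀ x, ‖G x‖ ≤ L) (x₀ : E) :
    ∃ χ : ℝ → E, χ 0 = x₀ ∧ ∀ t, HasDerivAt χ (G (χ t)) t := by
  have h1 : ∀ T : ℕ, ∃ χ : ℝ → E, χ 0 = x₀ ∧
      ∀ t ∈ Set.Ioo (-(T:ℝ)) T, HasDerivAt χ (G (χ t)) t := by
    intro T
    have hT : (0:ℝ) ∈ Set.Icc (-(T:ℝ)) T := by constructor <;> simp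
    have hpl : IsPicardLindelof (fun _ => G) (⟨0, hT⟩ : Set.Icc (-(T:ℝ)) T) x₀ (L * T) 0 L K :=
      { lipschitzOnWith := fun t _ => hK.lipschitzOnWith
        continuousOn := fun x _ => continuousOn_const
        norm_le := fun t _ x _ => hL x
        mul_max_le := by simp }
    obtain ⟨χ, h0, h⟩ := hpl.exists_eq_forall_mem_Icc_hasDerivWithinAt₀
    refine ⟨χ, h0, fun t ht => (h t (Set.Ioo_subset_Icc_self ht)).hasDerivAt ?_⟩
    exact Icc_mem_nhds ht.1 ht.2
  choose f f0 hf using h1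
  have huniq : ∀ m k : ℕ, m ≤ k → Set.EqOn (f m) (f k) (Set.Ioo (-(m:ℝ)) m) := by
    intro m k hmk
    rcases Nat.eq_zero_or_pos m with rfl | hm
    · intro t ht; simp at ht
    have hm' : (0:ℝ) < m := by exact_mod_cast hm
    have hmk' : (m:ℝ) ≤ k := by exact_mod_cast hmk
    refine ODE_solution_unique_of_mem_Ioo (v := fun _ => G) (s := fun _ => Set.univ) (K := K)
      (t₀ := 0) (fun t _ => hK.lipschitzOnWith) ⟨by linarith, hm'⟩
      (fun t ht => ⟨hf m t ht, trivial⟩)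
      (fun t ht => ⟨hf k t ⟨by linarith [ht.1], by linarith [ht.2]⟩, trivial⟩) (by rw [f0, f0])
  refine ⟨fun t => f (⌈|t|⌉₊ + 1) t, by simp [f0], fun t => ?_⟩
  set N := ⌈|t|⌉₊ + 2 with hN
  have key : ∀ s : ℝ, |s| < |t| + 1 → f (⌈|s|⌉₊ + 1) s = f N s := by
    intro s hs
    refine huniq _ _ ?_ ?_
    · rw [hN]
      have : ⌈|s|⌉₊ ≤ ⌈|t|⌉₊ + 1 := by
        rw [Nat.ceil_le]; push_cast; linarith [Nat.le_ceil |t|]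
      omega
    · have := Nat.le_ceil |s|
      push_cast
      rw [Set.mem_Ioo, ← abs_lt]; linarith
  have ht : t ∈ Set.Ioo (-(N:ℝ)) N := by
    have := Nat.le_ceil |t|
    rw [hN]; push_cast
    rw [Set.mem_Ioo, ← abs_lt]; linarith
  have hd := hf N t ht
  have hev : (fun t => f (⌈|t|⌉₊ + 1) t) =ᶠ[𝓝 t] f N := by
    have : ∀ᶠ s in 𝓝 t, |s| < |t| + 1 :=
      (continuous_abs.continuousAt (x := t)).eventually_lt continuousAt_const (by linarith)
    filter_upwards [this] with s hs using key s hs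
  have := hd.congr_of_eventuallyEq hev
  rwa [← hev.eq_of_nhds] at this

lemma V_small {E : Type*} [NormedAddCommGroup E] [NormedSpace ℝ E] [FiniteDimensional ℝ E]
    (V : E → ℝ) (hV : Continuous V) (hVproper : IsProper V) (hVpos : IsPosDefFn V) (ε : ℝ)
    (hε : 0 < ε) : ∃ m > 0, ∀ x, V x < m → ‖x‖ < ε := by
  have : ProperSpace E := FiniteDimensional.proper ℝ E
  have h1 : ∀ᶠ x in Bornology.cobounded E, 1 ≤ V x := hVproper.eventually_ge_atTop 1
  obtain ⟨R, hR⟩ : ∃ R, ∀ x : E, R < ‖x‖ → 1 ≤ V x := by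
    rw [(Metric.hasBasis_cobounded_compl_closedBall (0:E)).eventually_iff] at h1
    obtain ⟨R, -, h⟩ := h1
    exact ⟨R, fun x hx => h (by simpa using hx)⟩
  let C : Set E := Metric.closedBall 0 R ∩ {x | ε ≤ ‖x‖}
  have hC : IsCompact C :=
    (isCompact_closedBall 0 R).inter_right (isClosed_le continuous_const continuous_norm)
  have : ∃ m > 0, ∀ x ∈ C, m ≤ V x := by
    rcases C.eq_empty_or_nonempty with h | h
    · exact ⟨1, one_pos, by simp [h]⟩
    · obtain ⟨y, hy, hmin⟩ := hC.exists_isMinOn h hV.continuousOn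
      refine ⟨V y, hVpos.2 y ?_, fun x hx => hmin hx⟩
      rintro rfl
      have := hy.2
      simp at this; linarith
  obtain ⟨m, hm, hmC⟩ := this
  refine ⟨min m 1, lt_min hm one_pos, fun x hx => ?_⟩
  by_contra hcon
  push Not at hcon
  by_cases hxR : R < ‖x‖
  · linarith [hR x hxR, lt_of_lt_of_le hx (min_le_right _ _)]
  · linarith [hmC x ⟨by simpa using hxR, hcon⟩, lt_of_lt_of_le hx (min_le_left _ _)]

lemma sublevel_compact {E : Type*} [NormedAddCommGroup E] [NormedSpace ℝ E]
    [FiniteDimensional ℝ E]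
    (V : E → ℝ) (hV : Continuous V) (hVproper : IsProper V) (c : ℝ) :
    IsCompact {x | V x ≤ c} := by
  have : ProperSpace E := FiniteDimensional.proper ℝ E
  refine Metric.isCompact_of_isClosed_isBounded (isClosed_le hV continuous_const) ?_
  have h1 : ∀ᶠ x in Bornology.cobounded E, c + 1 ≤ V x := hVproper.eventually_ge_atTop _
  rw [← Bornology.isCobounded_compl_iff]
  filter_upwards [h1] with x hx
  simp; linarith

lemma lyap_gas {E : Type*} [NormedAddCommGroup E] [NormedSpace ℝ E] [FiniteDimensional ℝ E]
    (F : E → E) (hF : ContDiff ℝ 1 F) (hF0 : F 0 = 0) (V : E → ℝ) (hV : ContDiff ℝ 1 V)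
    (hVproper : IsProper V) (hVpos : IsPosDefFn V)
    (hdec : ∀ x, x ≠ 0 → fderiv ℝ V x (F x) < 0) : IsGAS F := by
  have hVd : Differentiable ℝ V := hV.differentiable (by simp)
  have hVc : Continuous V := hV.continuous
  have hle : ∀ x, fderiv ℝ V x (F x) ≤ 0 := by
    intro x
    by_cases hx : x = 0
    · simp [hx, hF0]
    · exact (hdec x hx).le
  have hnn : ∀ x, 0 ≤ V x := by
    intro x
    by_cases hx : x = 0
    · simp [hx, hVpos.1]
    · exact (hVpos.2 x hx).le
  have hchain : ∀ (χ : ℝ → E) (t : ℝ) (v : E), HasDerivAt χ v t →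
      HasDerivAt (fun s => V (χ s)) (fderiv ℝ V (χ t) v) t := by
    intro χ t v h
    exact (hVd (χ t)).hasFDerivAt.comp_hasDerivAt t h
  constructor
  · intro ε hε
    obtain ⟨m, hm, hmV⟩ := V_small V hVc hVproper hVpos ε hε
    have : ∀ᶠ x in 𝓝 (0:E), V x < m := by
      refine hVc.continuousAt.eventually_lt continuousAt_const ?_
      rw [hVpos.1]; exact hm
    obtain ⟨δ, hδ, hball⟩ := Metric.eventually_nhds_iff.1 this
    refine ⟨δ / 2, by linarith, fun χ T hχ h0 t ht => (hmV _ ?_).le⟩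
    have hd : ∀ s ∈ Set.Icc 0 t, HasDerivAt (fun s => V (χ s)) (fderiv ℝ V (χ s) (F (χ s))) s :=
      fun s hs => hchain χ s _ (hχ s ⟨hs.1, hs.2.trans_lt ht.2⟩)
    have hanti : AntitoneOn (fun s => V (χ s)) (Set.Icc 0 t) := by
      refine antitoneOn_of_deriv_nonpos (convex_Icc _ _)
        (fun s hs => (hd s hs).continuousAt.continuousWithinAt)
        (fun s hs => (hd s (interior_subset hs)).differentiableAt.differentiableWithinAt)
        (fun s hs => ?_)
      rw [(hd s (interior_subset hs)).deriv]; exact hle _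
    have h1 := hanti (Set.left_mem_Icc.2 ht.1) (Set.right_mem_Icc.2 ht.1) ht.1
    refine lt_of_le_of_lt h1 (hball ?_)
    rw [dist_zero_right]; linarith
  · intro x₀
    have hS : IsCompact {x | V x ≤ V x₀} := sublevel_compact V hVc hVproper _
    obtain ⟨R, hRpos, hR⟩ := hS.isBounded.exists_pos_norm_le
    let φ : ContDiffBump (0:E) := ⟨R, R + 1, hRpos, by linarith⟩
    have hφ1 : ∀ x, V x ≤ V x₀ → φ x = 1 := fun x hx =>
      φ.one_of_mem_closedBall (by simpa using hR x hx)
    have hGs : ContDiff ℝ 1 (fun x => φ x • F x) := φ.contDiff.smul hF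
    have hGc : HasCompactSupport (fun x => φ x • F x) := φ.hasCompactSupport.smul_right
    obtain ⟨K, hK⟩ := hGs.lipschitzWith_of_hasCompactSupport hGc (by simp)
    obtain ⟨L, hL⟩ := hGc.exists_bound_of_continuous hGs.continuous
    have hL' : ∀ x, ‖φ x • F x‖ ≤ L.toNNReal := fun x => (hL x).trans (Real.le_coe_toNNReal L)
    obtain ⟨χ, h0, hχ⟩ := global_ode _ K L.toNNReal hK hL' x₀
    have hd : ∀ t, HasDerivAt (fun s => V (χ s)) (φ (χ t) * fderiv ℝ V (χ t) (F (χ t))) t := by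
      intro t
      have := hchain χ t _ (hχ t)
      simpa using this
    have hanti : Antitone (fun s => V (χ s)) := by
      refine antitone_of_deriv_nonpos (fun t => (hd t).differentiableAt) (fun t => ?_)
      rw [(hd t).deriv]
      exact mul_nonpos_of_nonneg_of_nonpos φ.nonneg (hle _)
    have hVle : ∀ t, 0 ≤ t → V (χ t) ≤ V x₀ := fun t ht => by
      have := hanti ht
      simpa [h0] using this
    refine ⟨χ, h0, fun t ht => ?_, ?_⟩
    · have := hχ t
      rwa [hφ1 _ (hVle t ht), one_smul] at this
    rw [Metric.tendsto_atTop]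
    intro ε hε
    obtain ⟨m, hm, hmV⟩ := V_small V hVc hVproper hVpos ε hε
    suffices h : ∃ T, 0 ≤ T ∧ V (χ T) < m by
      obtain ⟨T, -, hT⟩ := h
      refine ⟨T, fun t ht => ?_⟩
      rw [dist_zero_right]
      exact hmV _ (lt_of_le_of_lt (hanti ht) hT)
    by_contra hcon
    push Not at hcon
    have hC : IsCompact ({x | V x ≤ V x₀} ∩ {x | m ≤ V x}) :=
      hS.inter_right (isClosed_le continuous_const hVc)
    have hne : ({x | V x ≤ V x₀} ∩ {x | m ≤ V x}).Nonempty :=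
      ⟨x₀, le_refl (V x₀), by simpa [h0] using hcon 0 le_rfl⟩
    have hcont : Continuous (fun x => fderiv ℝ V x (F x)) :=
      (hV.continuous_fderiv (by simp)).clm_apply hF.continuous
    obtain ⟨y, hy, hmax⟩ := hC.exists_isMaxOn hne hcont.continuousOn
    have hy0 : y ≠ 0 := by
      rintro rfl
      have := hy.2
      simp only [Set.mem_ofPred_eq, hVpos.1] at this; linarith
    have hw := hdec y hy0
    set w := fderiv ℝ V y (F y) with hwdef
    have hd2 : ∀ t, HasDerivAt (fun s => V (χ s) - w * s)
        (φ (χ t) * fderiv ℝ V (χ t) (F (χ t)) - w) t := by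
      intro t
      simpa using (hd t).fun_sub ((hasDerivAt_id t).const_mul w)
    have hanti2 : AntitoneOn (fun s => V (χ s) - w * s) (Set.Ici 0) := by
      refine antitoneOn_of_deriv_nonpos (convex_Ici _)
        (fun s hs => (hd2 s).continuousAt.continuousWithinAt)
        (fun s hs => (hd2 s).differentiableAt.differentiableWithinAt)
        (fun s hs => ?_)
      have hs' : 0 ≤ s := interior_subset hs
      rw [(hd2 s).deriv, hφ1 _ (hVle s hs'), one_mul]
      have := hmax (⟨hVle s hs', hcon s hs'⟩ : χ s ∈ {x | V x ≤ V x₀} ∩ {x | m ≤ V x})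
      simp only [Set.mem_ofPred_eq] at this
      linarith
    have hT : 0 ≤ V x₀ / (-w) + 1 := by
      have := div_nonneg (hnn x₀) (by linarith : 0 ≤ -w)
      linarith
    have h3 := hanti2 (Set.self_mem_Ici) (Set.mem_Ici.2 hT) hT
    simp only [h0, mul_zero, sub_zero] at h3
    have h4 : w * (V x₀ / (-w) + 1) = - V x₀ + w := by
      have hw0 : w ≠ 0 := hw.ne
      rw [div_neg]
      field_simp
    rw [h4] at h3
    have := hnn (χ (V x₀ / (-w) + 1))
    linarith

lemma local_neg {E : Type*} [NormedAddCommGroup E] [NormedSpace ℝ E] [FiniteDimensional ℝ E]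
    (D : E → E →L[ℝ] ℝ) (H : E →L[ℝ] E →L[ℝ] ℝ) (hD : HasFDerivAt D H 0) (hD0 : D 0 = 0)
    (G : E → E) (M : E →L[ℝ] E) (hG : HasFDerivAt G M 0) (hG0 : G 0 = 0)
    (hneg : ∀ x, x ≠ 0 → H x (M x) < 0) :
    ∃ r > 0, ∀ x, x ≠ 0 → ‖x‖ < r → D x (G x) < 0 := by
  have : ProperSpace E := FiniteDimensional.proper ℝ E
  have hc : ∃ c > 0, ∀ x, H x (M x) ≤ - c * ‖x‖ ^ 2 := by
    rcases (Metric.sphere (0:E) 1).eq_empty_or_nonempty with h | h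
    · refine ⟨1, one_pos, fun x => ?_⟩
      by_cases hx : x = 0
      · simp [hx]
      · exfalso
        have : ‖x‖⁻¹ • x ∈ Metric.sphere (0:E) 1 := by
          simp [norm_smul, hx]
        rw [h] at this; exact this
    · have hcont : Continuous fun x => H x (M x) := H.continuous.clm_apply M.continuous
      obtain ⟨y, hy, hmax⟩ := (isCompact_sphere (0:E) 1).exists_isMaxOn h hcont.continuousOn
      have hy0 : y ≠ 0 := by rintro rfl; simp at hy
      refine ⟨-(H y (M y)), by linarith [hneg y hy0], fun x => ?_⟩
      by_cases hx : x = 0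
      · simp [hx]
      have hx' : ‖x‖ ≠ 0 := norm_ne_zero_iff.2 hx
      have hmem : ‖x‖⁻¹ • x ∈ Metric.sphere (0:E) 1 := by
        simp [norm_smul, hx]
      have h1 := hmax hmem
      simp only [Set.mem_ofPred_eq, map_smul, ContinuousLinearMap.smul_apply, smul_eq_mul] at h1
      have h2 : 0 < ‖x‖ ^ 2 := by positivity
      have h3 : H x (M x) = (‖x‖⁻¹ * (‖x‖⁻¹ * H x (M x))) * ‖x‖ ^ 2 := by
        field_simp
      rw [h3, neg_neg]
      exact mul_le_mul_of_nonneg_right h1 h2.le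
  obtain ⟨c, hc0, hc⟩ := hc
  have e1 : (fun x => D x - H x) =o[𝓝 0] (fun x => x) := by
    simpa [hD0] using hD.isLittleO
  have e2 : (fun x => G x - M x) =o[𝓝 0] (fun x => x) := by
    simpa [hG0] using hG.isLittleO
  have e3 : G =O[𝓝 0] (fun x => x) := by
    simpa [hG0] using hG.isBigO_sub
  have e4 : (fun x => H x) =O[𝓝 0] (fun x => x) := H.isBigO_id _
  have b1 : (fun x => (D x - H x) (G x)) =o[𝓝 0] (fun x => ‖x‖ * ‖x‖) := by
    refine IsBigO.trans_isLittleO (g := fun x => ‖D x - H x‖ * ‖G x‖) ?_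
      (e1.norm_norm.mul_isBigO e3.norm_norm)
    refine IsBigO.of_bound 1 (Eventually.of_forall fun x => ?_)
    simpa using (D x - H x).le_opNorm (G x)
  have b2 : (fun x => H x (G x - M x)) =o[𝓝 0] (fun x => ‖x‖ * ‖x‖) := by
    refine IsBigO.trans_isLittleO (g := fun x => ‖H x‖ * ‖G x - M x‖) ?_
      (e4.norm_norm.mul_isLittleO e2.norm_norm)
    refine IsBigO.of_bound 1 (Eventually.of_forall fun x => ?_)
    simpa using (H x).le_opNorm (G x - M x)
  have b3 := (b1.add b2).def (half_pos hc0)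
  obtain ⟨r, hr, hb⟩ := Metric.eventually_nhds_iff.1 b3
  refine ⟨r, hr, fun x hx hxr => ?_⟩
  have h1 := hb (y := x) (by simpa using hxr)
  have h2 := hc x
  have h3 : D x (G x) = H x (M x) + ((D x - H x) (G x) + H x (G x - M x)) := by
    simp
  have hx' : 0 < ‖x‖ := norm_pos_iff.2 hx
  rw [Real.norm_eq_abs, Real.norm_eq_abs, abs_of_pos (mul_pos hx' hx')] at h1
  have h4 := le_abs_self ((D x - H x) (G x) + H x (G x - M x))
  rw [h3]
  nlinarith [mul_pos hc0 (mul_pos hx' hx')]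

open scoped Manifold ContDiff in
lemma exists_rho {E : Type*} [NormedAddCommGroup E] [NormedSpace ℝ E] [FiniteDimensional ℝ E]
    (g q : E → ℝ) (hg : Continuous g) (hq : Continuous q) (hq0 : ∀ x, 0 ≤ q x)
    (r : ℝ) (hr : 0 < r) (hloc : ∀ x, x ≠ 0 → ‖x‖ < r → g x < 0)
    (hA : ∀ x, x ≠ 0 → q x = 0 → g x < 0) :
    ∃ ρ : E → ℝ, ContDiff ℝ 1 ρ ∧ (∀ x, ‖x‖ < r / 2 → ρ x = 0) ∧
      ∀ x, x ≠ 0 → g x - ρ x * q x < 0 := by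
  have := exists_contMDiffMap_forall_mem_convex_of_local_const (n := 1) 𝓘(ℝ, E)
    (t := fun x : E => {c : ℝ | (‖x‖ < r / 2 → c = 0) ∧ (x ≠ 0 → g x - c * q x < 0)}) ?_ ?_
  · obtain ⟨ρ, hρ⟩ := this
    exact ⟨ρ, ρ.contMDiff.contDiff, fun x => (hρ x).1, fun x => (hρ x).2⟩
  · intro x c hc d hd s t hs ht hst
    refine ⟨fun h => by simp [hc.1 h, hd.1 h], fun h => ?_⟩
    have h1 := hc.2 h
    have h2 := hd.2 h
    have : g x - (s • c + t • d) * q x = s * (g x - c * q x) + t * (g x - d * q x) := by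
      simp only [smul_eq_mul]
      linear_combination (-g x) * hst
    rw [this]
    rcases hs.eq_or_lt with rfl | hs
    · have : t = 1 := by linarith
      subst this; linarith
    · nlinarith [mul_pos_of_neg_of_neg h1 (neg_lt_zero.2 hs), mul_nonneg ht (neg_nonneg.2 h2.le)]
  · intro x
    by_cases hx : ‖x‖ < r
    · refine ⟨0, ?_⟩
      have : ∀ᶠ y in 𝓝 x, ‖y‖ < r := continuous_norm.continuousAt.eventually_lt continuousAt_const hx
      filter_upwards [this] with y hy
      exact ⟨fun _ => rfl, fun h => by simpa using hloc y h hy⟩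
    · have hx0 : x ≠ 0 := by rintro rfl; simp at hx; linarith
      obtain ⟨c, hc⟩ : ∃ c, g x - c * q x < 0 := by
        rcases (hq0 x).eq_or_lt with h | h
        · exact ⟨0, by simpa using hA x hx0 h.symm⟩
        · refine ⟨(g x + 1) / q x, ?_⟩
          rw [div_mul_cancel₀ _ h.ne']; linarith
      refine ⟨c, ?_⟩
      have h1 : ∀ᶠ y in 𝓝 x, r / 2 < ‖y‖ :=
        continuousAt_const.eventually_lt continuous_norm.continuousAt (by linarith)
      have h2 : ∀ᶠ y in 𝓝 x, g y - c * q y < 0 :=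
        (hg.sub (continuous_const.mul hq)).continuousAt.eventually_lt continuousAt_const hc
      filter_upwards [h1, h2] with y hy1 hy2
      exact ⟨fun h => by linarith, fun _ => hy2⟩

theorem stmt1 {n p : ℕ}
    (a : (Fin n → ℝ) → (Fin n → ℝ)) (b : (Fin n → ℝ) → Fin n → Fin p → ℝ)
    (A : Matrix (Fin n) (Fin n) ℝ) (B : Matrix (Fin n) (Fin p) ℝ)
    (K : Matrix (Fin p) (Fin n) ℝ)
    (ha : ContDiff ℝ 1 a) (ha0 : a 0 = 0)
    (hA : ∀ v, fderiv ℝ a 0 v = A.mulVec v)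
    (hb : ContDiff ℝ 1 b) (hB : B = Matrix.of (b 0))
    (hHurwitz : Hurwitz (A + B * K))
    (V : (Fin n → ℝ) → ℝ)
    (hV : ContDiff ℝ 2 V) (hVnonneg : ∀ χ, 0 ≤ V χ)
    (hVproper : IsProper V) (hVpos : IsPosDefFn V)
    (hP : (((1:ℝ)/2) • hessianAt V 0).PosDef)
    (hLyap : (-((A + B * K)ᵀ * (((1:ℝ)/2) • hessianAt V 0)
        + (((1:ℝ)/2) • hessianAt V 0) * (A + B * K))).PosDef)
    (hArtstein : ∀ χ : Fin n → ℝ, χ ≠ 0 →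
        (∀ i, fderiv ℝ V χ (fun k => b χ k i) = 0) → fderiv ℝ V χ (a χ) < 0) :
    ∃ α₀ : (Fin n → ℝ) → (Fin p → ℝ), LocallyLipschitz α₀ ∧
      DifferentiableAt ℝ α₀ 0 ∧ α₀ 0 = 0 ∧ (∀ v, fderiv ℝ α₀ 0 v = K.mulVec v) ∧
      IsGAS (fun χ => a χ + (Matrix.of (b χ)).mulVec (α₀ χ)) ∧
      (∀ χ : Fin n → ℝ, χ ≠ 0 →
        fderiv ℝ V χ (a χ + (Matrix.of (b χ)).mulVec (α₀ χ)) < 0) := by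
  have hVd : Differentiable ℝ V := hV.differentiable (by simp)
  have hD1 : ContDiff ℝ 1 (fderiv ℝ V) := hV.fderiv_right (by norm_num)
  have hD0 : fderiv ℝ V 0 = 0 := by
    apply IsLocalMin.fderiv_eq_zero
    exact Eventually.of_forall fun x => by rw [hVpos.1]; exact hVnonneg x
  -- Hessian as bilinear form
  set H := fderiv ℝ (fderiv ℝ V) 0 with hH
  set Q := hessianAt V 0 with hQ
  have hHQ : ∀ x y, H x y = x ⬝ᵥ Q *ᵥ y := by
    intro x y
    have hx : x = ∑ i, x i • Pi.single i (1:ℝ) := by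
      ext k; simp [Finset.sum_apply, Pi.single_apply]
    have hy : y = ∑ i, y i • Pi.single i (1:ℝ) := by
      ext k; simp [Finset.sum_apply, Pi.single_apply]
    conv_lhs => rw [hx, hy]
    simp only [map_sum, map_smul, ContinuousLinearMap.sum_apply, ContinuousLinearMap.smul_apply,
      smul_eq_mul, dotProduct, mulVec, hQ, hessianAt, Matrix.of_apply, iteratedFDeriv_two_apply]
    simp only [Finset.mul_sum, ← hH]
    rw [Finset.sum_comm]
    refine Finset.sum_congr rfl fun i _ => Finset.sum_congr rfl fun j _ => ?_
    simp
    ring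
  have hQs : Qᵀ = Q := by
    have := hP.isHermitian.eq
    rw [Matrix.conjTranspose_eq_transpose_of_trivial, Matrix.transpose_smul] at this
    exact smul_right_injective _ (by norm_num : (1:ℝ)/2 ≠ 0) this
  set M := A + B * K with hM
  have hneg : ∀ x, x ≠ 0 → H x (M.mulVecLin.toContinuousLinearMap x) < 0 := by
    intro x hx
    have h1 := hLyap.dotProduct_mulVec_pos hx
    have h2 : H x (M *ᵥ x) = x ⬝ᵥ (Q * M) *ᵥ x := by
      rw [hHQ, Matrix.mulVec_mulVec]
    have h3 : x ⬝ᵥ (Mᵀ * Q) *ᵥ x = x ⬝ᵥ (Q * M) *ᵥ x := by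
      have : Mᵀ * Q = (Q * M)ᵀ := by rw [Matrix.transpose_mul, hQs]
      rw [this, Matrix.mulVec_transpose, dotProduct_comm, Matrix.dotProduct_mulVec]
    simp only [star_trivial, Matrix.mul_smul, Matrix.smul_mul, Matrix.neg_mulVec,
      Matrix.add_mulVec, Matrix.smul_mulVec, dotProduct_neg, dotProduct_add, dotProduct_smul,
      smul_eq_mul, h3] at h1
    simp only [LinearMap.coe_toContinuousLinearMap', Matrix.mulVecLin_apply]
    rw [h2]; linarith
  -- the linear feedback
  have hK1 : ContDiff ℝ 1 (fun x : Fin n → ℝ => K *ᵥ x) :=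
    K.mulVecLin.toContinuousLinearMap.contDiff
  have hKd : HasFDerivAt (fun x : Fin n → ℝ => K *ᵥ x) K.mulVecLin.toContinuousLinearMap 0 :=
    K.mulVecLin.toContinuousLinearMap.hasFDerivAt
  have hbα : ∀ α : (Fin n → ℝ) → (Fin p → ℝ), ContDiff ℝ 1 α →
      ContDiff ℝ 1 (fun x => a x + (Matrix.of (b x)) *ᵥ (α x)) := by
    intro α hα
    refine ha.add ?_
    rw [contDiff_pi]
    intro i
    simp only [mulVec, dotProduct, Matrix.of_apply]
    refine ContDiff.sum fun j _ => ?_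
    exact (contDiff_pi.1 (contDiff_pi.1 hb i) j).mul (contDiff_pi.1 hα j)
  have hG1 := hbα _ hK1
  have hGd : HasFDerivAt (fun x => a x + (Matrix.of (b x)) *ᵥ (K *ᵥ x))
      M.mulVecLin.toContinuousLinearMap 0 := by
    have h1 : HasFDerivAt a A.mulVecLin.toContinuousLinearMap 0 := by
      have := (ha.differentiable (by simp) 0).hasFDerivAt
      refine this.congr_fderiv (ContinuousLinearMap.ext fun v => ?_)
      simp [hA v]
    have h2 : HasFDerivAt (fun x => (Matrix.of (b x)) *ᵥ (K *ᵥ x))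
        (B * K).mulVecLin.toContinuousLinearMap 0 := by
      rw [hasFDerivAt_pi']
      intro i
      simp only [mulVec, dotProduct, Matrix.of_apply]
      have h3 : ∀ j : Fin p, HasFDerivAt (fun x : Fin n → ℝ => b x i j * (K *ᵥ x) j)
          (b 0 i j • (ContinuousLinearMap.proj j ∘L K.mulVecLin.toContinuousLinearMap)) 0 := by
        intro j
        have hbij : HasFDerivAt (fun x => b x i j) (fderiv ℝ (fun x => b x i j) 0) 0 :=
          ((contDiff_pi.1 (contDiff_pi.1 hb i) j).differentiable (by simp) 0).hasFDerivAt
        have := hbij.fun_mul (hasFDerivAt_pi'.1 hKd j)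
        simpa using this
      have := HasFDerivAt.fun_sum (u := Finset.univ) fun j _ => h3 j
      refine this.congr_fderiv (ContinuousLinearMap.ext fun v => ?_)
      simp [hB, ← Matrix.mulVec_mulVec, mulVec, dotProduct]
    refine (h1.fun_add h2).congr_fderiv (ContinuousLinearMap.ext fun v => ?_)
    simp [hM, Matrix.add_mulVec]
  obtain ⟨r, hr, hloc⟩ := local_neg (fderiv ℝ V) H
    ((hD1.differentiable (by simp) 0).hasFDerivAt) hD0 _ _ hGd (by simp [ha0]) hneg
  -- `w = L_b V`
  let w : (Fin n → ℝ) → Fin p → ℝ := fun x i => fderiv ℝ V x (fun k => b x k i)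
  have hw1 : ContDiff ℝ 1 w := by
    rw [contDiff_pi]
    intro i
    refine hD1.clm_apply ?_
    rw [contDiff_pi]
    intro k
    exact contDiff_pi.1 (contDiff_pi.1 hb k) i
  have hw : ∀ x u, fderiv ℝ V x ((Matrix.of (b x)) *ᵥ u) = ∑ i, u i * w x i := by
    intro x u
    have : (Matrix.of (b x)) *ᵥ u = ∑ i, u i • (fun k => b x k i) := by
      ext k
      simp [mulVec, dotProduct, Finset.sum_apply, mul_comm]
    rw [this]
    simp [w]
  obtain ⟨ρ, hρ1, hρ0, hρ⟩ := exists_rho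
    (fun x => fderiv ℝ V x (a x + (Matrix.of (b x)) *ᵥ (K *ᵥ x)))
    (fun x => ∑ i, w x i * w x i)
    (hD1.continuous.clm_apply hG1.continuous)
    (by have := hw1.continuous; fun_prop)
    (fun x => Finset.sum_nonneg fun i _ => mul_self_nonneg _) r hr hloc
    (by
      intro x hx hq
      have hz : ∀ i, w x i = 0 := by
        intro i
        have := (Finset.sum_eq_zero_iff_of_nonneg (fun i _ => mul_self_nonneg (w x i))).1 hq i
          (Finset.mem_univ i)
        exact mul_self_eq_zero.1 this
      rw [map_add, hw]
      simpa [hz] using hArtstein x hx hz)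
  have hα1 : ContDiff ℝ 1 (fun x => K *ᵥ x - ρ x • w x) := hK1.sub (hρ1.smul hw1)
  have hev : (fun x => K *ᵥ x - ρ x • w x) =ᶠ[𝓝 0] (fun x => K *ᵥ x) := by
    filter_upwards [Metric.ball_mem_nhds (0 : Fin n → ℝ) (half_pos hr)] with x hx
    rw [hρ0 x (by simpa using hx)]
    simp
  have hαd := hKd.congr_of_eventuallyEq hev
  have hdec : ∀ x : Fin n → ℝ, x ≠ 0 →
      fderiv ℝ V x (a x + (Matrix.of (b x)) *ᵥ (K *ᵥ x - ρ x • w x)) < 0 := by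
    intro x hx
    have h1 := hρ x hx
    rw [Matrix.mulVec_sub, Matrix.mulVec_smul, ← add_sub_assoc, map_sub, map_smul, hw x (w x)]
    simpa using h1
  refine ⟨fun x => K *ᵥ x - ρ x • w x, hα1.locallyLipschitz, hαd.differentiableAt, ?_, ?_, ?_,
    hdec⟩
  · simpa using hev.eq_of_nhds
  · intro v
    rw [hαd.fderiv]; simp
  · refine lyap_gas _ (hbα _ hα1) ?_ V (hV.of_le (by norm_num)) hVproper hVpos hdec
    have := hev.eq_of_nhds
    simp only [this, ha0]
    simp
end
end

section
/- (Local optimality and global inverse optimality.) Let R ∈ ℝ^{p×p} and Q ∈ ℝ^{n×n} be positive definite matrices. Assume there exists a C² proper positive definite function V: ℝ^n → ℝ≥0 such that, with P := (1/2)·H(V)(0): (i) P is positive definite and satisfies the algebraic Riccati equation PA + AᵀP − PBR⁻¹BᵀP + Q = 0; and (ii) for every χ ∈ ℝ^n \ {0}, L_bV(χ) = 0 implies L_aV(χ) < 0. Then there exist a continuous function q: ℝ^n → ℝ≥0 with q(χ) > 0 for all χ ≠ 0, and a continuous function r: ℝ^n → ℝ^{p×p} whose values are symmetric positive definite matrices,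 such that: (a) q(χ) = χᵀQχ + o(|χ|²) as χ → 0 (in particular q is twice differentiable at 0 with (1/2)·H(q)(0) = Q) and r(0) = R; and (b) V satisfies the Hamilton–Jacobi–Bellman equation q(χ) + L_aV(χ) − (1/4)·L_bV(χ) r(χ)⁻¹ L_bV(χ)ᵀ = 0 for all χ ∈ ℝ^n. -/
open Matrix Filter Topology Asymptotics

noncomputable section

theorem aux_mul {E : Type*} [NormedAddCommGroup E] [NormedSpace ℝ E] (f g : E → ℝ)
    (f' g' : E →L[ℝ] ℝ) (hf : HasFDerivAt f f' 0) (hg : HasFDerivAt g g' 0)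
    (hf0 : f 0 = 0) (hg0 : g 0 = 0) :
    (fun x => f x * g x - f' x * g' x) =o[𝓝 (0 : E)] (fun x => ‖x‖ ^ 2) := by
  have h1 : (fun x => f x - f' x) =o[𝓝 (0 : E)] (fun x => ‖x‖) := by
    have := hf.isLittleO.norm_right
    simpa [hf0] using this
  have h2 : (fun x => g x - g' x) =o[𝓝 (0 : E)] (fun x => ‖x‖) := by
    have := hg.isLittleO.norm_right
    simpa [hg0] using this
  have h3 : (fun x => g x) =O[𝓝 (0 : E)] (fun x => ‖x‖) := by
    have := hg.isBigO_sub.norm_right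
    simpa [hg0] using this
  have h4 : (fun x => f' x) =O[𝓝 (0 : E)] (fun x => ‖x‖) :=
    (f'.isBigO_id (𝓝 0)).norm_right
  have h5 := (h1.mul_isBigO h3).add (h4.mul_isLittleO h2)
  refine (h5.congr_left fun x => ?_).congr_right fun x => ?_
  · ring
  · ring

theorem aux_posdef {n : ℕ} (Q : Matrix (Fin n) (Fin n) ℝ) (hQ : Q.PosDef) :
    ∃ c > 0, ∀ v : Fin n → ℝ, c * ‖v‖ ^ 2 ≤ v ⬝ᵥ Q.mulVec v := by
  have hpos : ∀ v : Fin n → ℝ, v ≠ 0 → 0 < v ⬝ᵥ Q.mulVec v := fun v hv => by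
    simpa using hQ.dotProduct_mulVec_pos hv
  have hcont : Continuous fun v : Fin n → ℝ => v ⬝ᵥ Q.mulVec v := by fun_prop
  obtain ⟨c, hc, h⟩ := (isCompact_sphere (0 : Fin n → ℝ) 1).exists_forall_le'
    (a := 0) hcont.continuousOn (fun v hv => hpos v (by
      rintro rfl
      simp at hv))
  refine ⟨c, hc, fun v => ?_⟩
  by_cases hv : v = 0
  · simp [hv]
  have hn : 0 < ‖v‖ := norm_pos_iff.2 hv
  have := h (‖v‖⁻¹ • v) (by simp [norm_smul, hn.ne'])
  simp only [smul_dotProduct, mulVec_smul, dotProduct_smul, smul_eq_mul] at this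
  have h2 := mul_le_mul_of_nonneg_left this (sq_nonneg ‖v‖)
  field_simp at h2
  linarith

theorem aux_alg {n p : ℕ} (P A Q : Matrix (Fin n) (Fin n) ℝ) (B : Matrix (Fin n) (Fin p) ℝ)
    (S : Matrix (Fin p) (Fin p) ℝ) (hP : Pᵀ = P)
    (h : P * A + Aᵀ * P - P * B * S * Bᵀ * P + Q = 0) (v : Fin n → ℝ) :
    (Bᵀ *ᵥ (P *ᵥ v)) ⬝ᵥ S *ᵥ (Bᵀ *ᵥ (P *ᵥ v)) - 2 * ((P *ᵥ v) ⬝ᵥ A *ᵥ v)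
      = v ⬝ᵥ Q *ᵥ v := by
  have hQ : Q = P * B * S * Bᵀ * P - P * A - Aᵀ * P := by
    have := eq_neg_of_add_eq_zero_right h
    rw [this]; abel
  have e1 : (Bᵀ *ᵥ (P *ᵥ v)) ⬝ᵥ S *ᵥ (Bᵀ *ᵥ (P *ᵥ v)) = v ⬝ᵥ (P * B * S * Bᵀ * P) *ᵥ v := by
    simp only [← mulVec_mulVec]
    rw [dotProduct_mulVec v P, ← mulVec_transpose, hP, dotProduct_mulVec (P *ᵥ v) B,
      ← mulVec_transpose]
  have e2 : (P *ᵥ v) ⬝ᵥ A *ᵥ v = v ⬝ᵥ (P * A) *ᵥ v := by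
    simp only [← mulVec_mulVec]
    rw [dotProduct_mulVec v P, ← mulVec_transpose, hP]
  have e3 : (P *ᵥ v) ⬝ᵥ A *ᵥ v = v ⬝ᵥ (Aᵀ * P) *ᵥ v := by
    simp only [← mulVec_mulVec]
    rw [dotProduct_mulVec v Aᵀ, ← mulVec_transpose, transpose_transpose, dotProduct_comm]
  rw [hQ, sub_mulVec, sub_mulVec, dotProduct_sub, dotProduct_sub, ← e1, ← e2, ← e3]
  ring

theorem aux_expand {n : ℕ} (l : (Fin n → ℝ) →L[ℝ] ℝ) (v : Fin n → ℝ) :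
    l v = ∑ k, v k * l (Pi.single k 1) := by
  conv_lhs => rw [pi_eq_sum_univ' v]
  rw [map_sum]
  refine Finset.sum_congr rfl fun k _ => ?_
  rw [map_smul, smul_eq_mul]

theorem aux_m {n : ℕ} (s L : (Fin n → ℝ) → ℝ) (hs : Continuous s) (hL : Continuous L)
    (hs0 : ∀ x, 0 ≤ s x) (hA : ∀ x, x ≠ 0 → s x = 0 → L x < 0) (δ : ℝ) (hδ : 0 < δ)
    (hloc : ∀ x, x ≠ 0 → ‖x‖ < δ → 0 < s x - L x) :
    ∃ m : C(Fin n → ℝ, ℝ), ∀ x, 1 ≤ m x ∧ (x ≠ 0 → 0 < m x * s x - L x) ∧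
      (‖x‖ < δ / 2 → m x = 1) := by
  refine exists_continuous_forall_mem_convex_of_local_const
    (t := fun x => {m : ℝ | 1 ≤ m ∧ (x ≠ 0 → 0 < m * s x - L x) ∧ (‖x‖ < δ / 2 → m = 1)})
    ?_ ?_
  · rintro x u ⟨hu1, hu2, hu3⟩ w ⟨hw1, hw2, hw3⟩ α γ hα hγ hαγ
    obtain rfl : γ = 1 - α := by linarith
    refine ⟨?_, fun hx => ?_, fun hx => ?_⟩
    · simp only [smul_eq_mul]; nlinarith
    · have h1 := hu2 hx
      have h2 := hw2 hx
      simp only [smul_eq_mul]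
      rcases hα.eq_or_lt with rfl | hα'
      · simpa using h2
      · nlinarith [mul_pos hα' h1, mul_nonneg hγ h2.le]
    · rw [hu3 hx, hw3 hx]; simp
  · intro x
    by_cases hx : ‖x‖ < δ
    · refine ⟨1, ?_⟩
      have : ∀ᶠ y in 𝓝 x, ‖y‖ < δ := continuous_norm.continuousAt.eventually_lt_const hx
      filter_upwards [this] with y hy
      exact ⟨le_rfl, fun h0 => by simpa using hloc y h0 hy, fun _ => rfl⟩
    · push Not at hx
      have hx0 : x ≠ 0 := by
        rintro rfl
        simp at hx; linarith
      obtain ⟨c, hc1, hc⟩ : ∃ c : ℝ, 1 ≤ c ∧ 0 < c * s x - L x := by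
        rcases (hs0 x).eq_or_lt with h | h
        · exact ⟨1, le_rfl, by have := hA x hx0 h.symm; rw [← h]; linarith⟩
        · refine ⟨1 + |L x| / s x, by have := abs_nonneg (L x); simp; positivity, ?_⟩
          have := le_abs_self (L x)
          rw [add_mul, div_mul_cancel₀ _ h.ne']; linarith
      refine ⟨c, ?_⟩
      have h1 : ∀ᶠ y in 𝓝 x, δ / 2 < ‖y‖ :=
        continuous_norm.continuousAt.eventually_const_lt (by linarith)
      have h2 : ∀ᶠ y in 𝓝 x, 0 < c * s y - L y :=
        (((continuous_const.mul hs).sub hL).continuousAt).eventually_const_lt hc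
      filter_upwards [h1, h2] with y hy1 hy2
      exact ⟨hc1, fun _ => hy2, fun h => absurd h hy1.not_gt⟩

theorem aux_quad {p : ℕ} (S : Matrix (Fin p) (Fin p) ℝ) (x z : Fin p → ℝ) :
    (1/4) * (x ⬝ᵥ S *ᵥ x) - z ⬝ᵥ S *ᵥ z
      = ∑ i, ∑ j, 1/4 * S i j * (x i * x j - 2 * z i * (2 * z j)) := by
  simp only [dotProduct, mulVec, Finset.mul_sum, ← Finset.sum_sub_distrib]
  refine Finset.sum_congr rfl fun i _ => Finset.sum_congr rfl fun j _ => ?_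
  ring

theorem aux_main {n p : ℕ}
    (a : (Fin n → ℝ) → (Fin n → ℝ)) (b : (Fin n → ℝ) → Fin n → Fin p → ℝ)
    (A P : Matrix (Fin n) (Fin n) ℝ) (B : Matrix (Fin n) (Fin p) ℝ)
    (S : Matrix (Fin p) (Fin p) ℝ) (Q : Matrix (Fin n) (Fin n) ℝ)
    (ha : ContDiff ℝ 1 a) (ha0 : a 0 = 0)
    (hA : ∀ v, fderiv ℝ a 0 v = A.mulVec v)
    (hb : ContDiff ℝ 1 b) (hB : B = Matrix.of (b 0))
    (V : (Fin n → ℝ) → ℝ) (hV : ContDiff ℝ 2 V) (hV0 : fderiv ℝ V 0 = 0)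
    (hPdef : P = ((1:ℝ)/2) • hessianAt V 0) (hP : Pᵀ = P)
    (h : P * A + Aᵀ * P - P * B * S * Bᵀ * P + Q = 0) :
    (fun χ => ((1/4) * ((fun i => fderiv ℝ V χ (fun k => b χ k i)) ⬝ᵥ
              S.mulVec (fun i => fderiv ℝ V χ (fun k => b χ k i)))
        - fderiv ℝ V χ (a χ)) - χ ⬝ᵥ Q.mulVec χ) =o[𝓝 (0 : Fin n → ℝ)]
      (fun χ => ‖χ‖ ^ 2) := by
  have hDV : Differentiable ℝ (fderiv ℝ V) :=
    (hV.fderiv_right (m := 1) (by norm_num)).differentiable (by norm_num)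
  set D2 := fderiv ℝ (fderiv ℝ V) 0 with hD2
  have hDV0 : HasFDerivAt (fderiv ℝ V) D2 0 := (hDV 0).hasFDerivAt
  -- partial derivatives
  have hG : ∀ w, HasFDerivAt (fun χ => fderiv ℝ V χ w) (D2.flip w) 0 := fun w => by
    have := hDV0.clm_apply (hasFDerivAt_const w (0 : Fin n → ℝ))
    have e : (fderiv ℝ V 0) ∘SL (0 : (Fin n → ℝ) →L[ℝ] (Fin n → ℝ)) + D2.flip w = D2.flip w := by
      simp
    exact e ▸ this
  have hGval : ∀ (v : Fin n → ℝ) k, D2 v (Pi.single k 1) = 2 * (P *ᵥ v) k := by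
    intro v k
    have h1 : D2.flip (Pi.single k 1) v = ∑ j, v j * D2 (Pi.single j 1) (Pi.single k 1) := by
      rw [aux_expand]; simp
    have h2 : ∀ j, D2 (Pi.single j 1) (Pi.single k 1) = 2 * P k j := by
      intro j
      have : P k j = P j k := congrFun (congrFun hP j) k
      rw [this, hPdef]
      simp [hessianAt, iteratedFDeriv_two_apply, hD2]
    rw [ContinuousLinearMap.flip_apply] at h1
    rw [h1, mulVec, dotProduct, Finset.mul_sum]
    refine Finset.sum_congr rfl fun j _ => ?_
    rw [h2]; ring
  have hda : HasFDerivAt a (fderiv ℝ a 0) 0 :=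
    (ha.differentiable (by norm_num) 0).hasFDerivAt
  have hak : ∀ k, HasFDerivAt (fun χ => a χ k)
      ((ContinuousLinearMap.proj k).comp (fderiv ℝ a 0)) 0 := fun k => hasFDerivAt_pi'.1 hda k
  have hL : (fun χ => fderiv ℝ V χ (a χ) - 2 * ((P *ᵥ χ) ⬝ᵥ A *ᵥ χ)) =o[𝓝 (0 : Fin n → ℝ)]
      (fun χ => ‖χ‖ ^ 2) := by
    have := IsLittleO.sum (s := Finset.univ) fun k (_ : k ∈ Finset.univ) =>
      aux_mul _ _ _ _ (hG (Pi.single k 1)) (hak k) (by simp [hV0]) (by simp [ha0])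
    refine this.congr_left fun χ => ?_
    rw [aux_expand (fderiv ℝ V χ) (a χ), dotProduct, Finset.mul_sum, ← Finset.sum_sub_distrib]
    rw [Finset.sum_apply]
    refine Finset.sum_congr rfl fun k _ => ?_
    simp only [ContinuousLinearMap.flip_apply, hGval, ContinuousLinearMap.comp_apply,
      ContinuousLinearMap.proj_apply, hA]
    ring
  have hdb : ∀ i, HasFDerivAt (fun χ => (fun k => b χ k i))
      (fderiv ℝ (fun χ => (fun k => b χ k i)) 0) 0 := by
    intro i
    have hbd := hb.differentiable (by norm_num)
    have : Differentiable ℝ (fun χ => (fun k => b χ k i)) := by fun_prop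
    exact (this 0).hasFDerivAt
  have hβ : ∀ i, HasFDerivAt (fun χ => fderiv ℝ V χ (fun k => b χ k i))
      (D2.flip (fun k => b 0 k i)) 0 := by
    intro i
    have := hDV0.clm_apply (hdb i)
    rw [hV0, ContinuousLinearMap.zero_comp, zero_add] at this
    exact this
  have hβval : ∀ i (v : Fin n → ℝ), D2 v (fun k => b 0 k i) = 2 * (Bᵀ *ᵥ (P *ᵥ v)) i := by
    intro i v
    rw [aux_expand, mulVec, dotProduct, Finset.mul_sum]
    refine Finset.sum_congr rfl fun k _ => ?_
    rw [hGval, hB]; simp; ring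
  have hS : (fun χ => (1/4) * ((fun i => fderiv ℝ V χ (fun k => b χ k i)) ⬝ᵥ
              S.mulVec (fun i => fderiv ℝ V χ (fun k => b χ k i)))
        - (Bᵀ *ᵥ (P *ᵥ χ)) ⬝ᵥ S *ᵥ (Bᵀ *ᵥ (P *ᵥ χ))) =o[𝓝 (0 : Fin n → ℝ)]
      (fun χ => ‖χ‖ ^ 2) := by
    have := IsLittleO.sum (s := Finset.univ) fun i (_ : i ∈ Finset.univ) =>
      IsLittleO.sum (s := Finset.univ) fun j (_ : j ∈ Finset.univ) =>
      (aux_mul _ _ _ _ (hβ i) (hβ j) (by simp [hV0]) (by simp [hV0])).const_mul_left (1/4 * S i j)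
    refine this.congr_left fun χ => ?_
    rw [aux_quad]
    simp only [Finset.sum_apply, ContinuousLinearMap.flip_apply, hβval]
  refine (hS.sub hL).congr_left fun χ => ?_
  rw [← aux_alg P A Q B S hP h χ]
  ring

/-- local optimality and global inverse optimality. If `V` is a `C²`
proper positive definite function whose half-Hessian `P := ½ H(V)(0)` at the origin is
positive definite and solves the algebraic Riccati equation
`PA + AᵀP − PBR⁻¹BᵀP + Q = 0`, and the Artstein condition holds, then there are a
continuous state cost `q ≥ 0` (positive away from `0`, with quadratic approximation
`χᵀQχ` at `0`) and a continuous positive definite input-weight `r` with `r 0 = R`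
such that `V` solves the corresponding Hamilton–Jacobi–Bellman equation. -/
theorem stmt2 {n p : ℕ}
    (a : (Fin n → ℝ) → (Fin n → ℝ)) (b : (Fin n → ℝ) → Fin n → Fin p → ℝ)
    (A : Matrix (Fin n) (Fin n) ℝ) (B : Matrix (Fin n) (Fin p) ℝ)
    (R : Matrix (Fin p) (Fin p) ℝ) (Q : Matrix (Fin n) (Fin n) ℝ)
    (ha : ContDiff ℝ 1 a) (ha0 : a 0 = 0)
    (hA : ∀ v, fderiv ℝ a 0 v = A.mulVec v)
    (hb : ContDiff ℝ 1 b) (hB : B = Matrix.of (b 0))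
    (hR : R.PosDef) (hQ : Q.PosDef)
    (V : (Fin n → ℝ) → ℝ)
    (hV : ContDiff ℝ 2 V) (hVnonneg : ∀ χ, 0 ≤ V χ)
    (hVproper : IsProper V) (hVpos : IsPosDefFn V)
    (hP : (((1:ℝ)/2) • hessianAt V 0).PosDef)
    (hRiccati : (((1:ℝ)/2) • hessianAt V 0) * A + Aᵀ * (((1:ℝ)/2) • hessianAt V 0)
        - (((1:ℝ)/2) • hessianAt V 0) * B * R⁻¹ * Bᵀ * (((1:ℝ)/2) • hessianAt V 0)
        + Q = 0)
    (hArtstein : ∀ χ : Fin n → ℝ, χ ≠ 0 →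
        (∀ i, fderiv ℝ V χ (fun k => b χ k i) = 0) → fderiv ℝ V χ (a χ) < 0) :
    ∃ (q : (Fin n → ℝ) → ℝ) (r : (Fin n → ℝ) → Fin p → Fin p → ℝ),
      Continuous q ∧ (∀ χ, 0 ≤ q χ) ∧ (∀ χ, χ ≠ 0 → 0 < q χ) ∧
      Continuous r ∧ (∀ χ, (Matrix.of (r χ)).PosDef) ∧
      -- `q(χ) = χᵀQχ + o(‖χ‖²)` as `χ → 0`
      (fun χ => q χ - χ ⬝ᵥ Q.mulVec χ) =o[nhds (0 : Fin n → ℝ)] (fun χ => ‖χ‖ ^ 2) ∧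
      Matrix.of (r 0) = R ∧
      -- Hamilton–Jacobi–Bellman equation
      (∀ χ : Fin n → ℝ,
        q χ + fderiv ℝ V χ (a χ)
          - (1/4) * ((fun i => fderiv ℝ V χ (fun k => b χ k i)) ⬝ᵥ
              ((Matrix.of (r χ))⁻¹).mulVec (fun i => fderiv ℝ V χ (fun k => b χ k i)))
          = 0) := by
  set P := ((1:ℝ)/2) • hessianAt V 0 with hPdef
  have hPs : Pᵀ = P := by simpa using hP.isHermitian.eq
  have hV0 : fderiv ℝ V 0 = 0 := by
    refine IsLocalMin.fderiv_eq_zero (Eventually.of_forall fun x => ?_)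
    rw [hVpos.1]; exact hVnonneg x
  have hS : (R⁻¹).PosDef := hR.inv
  have hmain := aux_main a b A P B R⁻¹ Q ha ha0 hA hb hB V hV hV0 hPdef hPs hRiccati
  set β : (Fin n → ℝ) → Fin p → ℝ := fun χ i => fderiv ℝ V χ (fun k => b χ k i) with hβ
  set L : (Fin n → ℝ) → ℝ := fun χ => fderiv ℝ V χ (a χ) with hL
  set s : (Fin n → ℝ) → ℝ := fun χ => (1/4) * (β χ ⬝ᵥ R⁻¹ *ᵥ β χ) with hs
  have hmain' : (fun χ => (s χ - L χ) - χ ⬝ᵥ Q.mulVec χ) =o[𝓝 (0 : Fin n → ℝ)]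
      (fun χ => ‖χ‖ ^ 2) := hmain
  have cDV : Continuous (fderiv ℝ V) := hV.continuous_fderiv (by norm_num)
  have ca := ha.continuous
  have cb := hb.continuous
  have cL : Continuous L := cDV.clm_apply ca
  have cβ : Continuous β := continuous_pi fun i => cDV.clm_apply (by fun_prop)
  have cs : Continuous s := by
    have : Continuous fun χ => R⁻¹ *ᵥ β χ := by fun_prop
    exact continuous_const.mul (cβ.dotProduct this)
  have hspos : ∀ x, β x ≠ 0 → 0 < s x := fun x hx => by
    have := hS.dotProduct_mulVec_pos hx
    simp only [star_trivial] at this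
    simp only [hs]; linarith
  have hs0 : ∀ x, 0 ≤ s x := fun x => by
    by_cases hx : β x = 0
    · simp [hs, hx]
    · exact (hspos x hx).le
  have hArt : ∀ x, x ≠ 0 → s x = 0 → L x < 0 := fun x hx h0 => by
    refine hArtstein x hx fun i => ?_
    by_contra hne
    have : β x ≠ 0 := fun h => hne (congrFun h i)
    exact (hspos x this).ne' h0
  obtain ⟨c, hc, hQc⟩ := aux_posdef Q hQ
  obtain ⟨δ, hδ, hδ'⟩ := Metric.eventually_nhds_iff.1 (hmain'.bound (half_pos hc))
  have hloc : ∀ x, x ≠ 0 → ‖x‖ < δ → 0 < s x - L x := fun x hx hxd => by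
    have h1 := hδ' (y := x) (by simpa using hxd)
    have h2 := hQc x
    have h3 : 0 < ‖x‖ ^ 2 := by have := norm_pos_iff.2 hx; positivity
    rw [Real.norm_eq_abs, Real.norm_eq_abs, abs_of_pos h3] at h1
    have h4 := (abs_le.1 h1).1
    nlinarith [mul_pos hc h3]
  obtain ⟨m, hm⟩ := aux_m s L cs cL hs0 hArt δ hδ hloc
  have hmpos : ∀ x, 0 < m x := fun x => lt_of_lt_of_le one_pos (hm x).1
  have hq0 : m 0 * s 0 - L 0 = 0 := by simp [hs, hL, hβ, hV0]
  refine ⟨fun χ => m χ * s χ - L χ, fun χ => (m χ)⁻¹ • R, (m.continuous.mul cs).sub cL, ?_,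
    fun χ hχ => (hm χ).2.1 hχ, ?_, ?_, ?_, ?_, ?_⟩
  · intro χ
    by_cases hx : χ = 0
    · subst hx; exact hq0.ge
    · exact ((hm χ).2.1 hx).le
  · exact (m.continuous.inv₀ fun x => (hmpos x).ne').smul continuous_const
  · intro χ
    exact hR.smul (inv_pos.2 (hmpos χ))
  · refine hmain'.congr' ?_ EventuallyEq.rfl
    have : ∀ᶠ x in 𝓝 (0 : Fin n → ℝ), ‖x‖ < δ / 2 :=
      continuous_norm.continuousAt.eventually_lt_const (by simpa using hδ)
    filter_upwards [this] with x hx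
    rw [(hm x).2.2 hx, one_mul]
  · have : m 0 = 1 := (hm 0).2.2 (by simpa using hδ)
    simp only [this, inv_one, one_smul]
    rfl
  · intro χ
    have hinv : (Matrix.of ((m χ)⁻¹ • R : Fin p → Fin p → ℝ))⁻¹ = m χ • R⁻¹ := by
      change ((m χ)⁻¹ • R)⁻¹ = m χ • R⁻¹
      refine Matrix.inv_eq_left_inv ?_
      rw [smul_mul_smul_comm, mul_inv_cancel₀ (hmpos χ).ne', one_smul,
        Matrix.nonsing_inv_mul _ ((Matrix.isUnit_iff_isUnit_det _).1 hR.isUnit)]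
    change m χ * s χ - L χ + L χ - 1/4 * (β χ ⬝ᵥ
      (Matrix.of ((m χ)⁻¹ • R : Fin p → Fin p → ℝ))⁻¹ *ᵥ β χ) = 0
    rw [hinv, smul_mulVec, dotProduct_smul, smul_eq_mul]
    simp only [hs]
    ring
end
end

section
/- Assume there exists a C² positive definite proper function V∞: ℝ^n → ℝ≥0 such that (i) for every χ ∈ ℝ^n \ {0}, L_bV∞(χ) = 0 implies L_aV∞(χ) < 0, and (ii) P∞ := (1/2)·H(V∞)(0) is positive definite. Let K ∈ ℝ^{p×n} be such that A + BK is Hurwitz. If there exist a matrix K_u ∈ ℝ^{p×n} and a positive definite matrix P ∈ ℝ^{n×n} such that (A + BK)ᵀP + P(A + BK), (A + BK_u)ᵀP + P(A + BK_u), and (A + BK_u)ᵀP∞ + P∞(A + BK_u) are all negative definite, then there exists a smooth map α₀: ℝ^n → ℝ^p with α₀(0) = 0 and Dα₀(0) = K such that the origin of dχ/dt = a(χ) + b(χ)α₀(χ) is globally asymptotically stable. -/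
open Matrix Filter Topology Asymptotics

noncomputable section

section helpers

variable {E : Type*} [NormedAddCommGroup E] [NormedSpace ℝ E]

lemma aux_gexist [CompleteSpace E] (F : E → E) (K L : NNReal) (hK : LipschitzWith K F)
    (hL : ∀ x, ‖F x‖ ≤ L) (x₀ : E) :
    ∃ χ : ℝ → E, χ 0 = x₀ ∧ ∀ t, HasDerivAt χ (F (χ t)) t := by
  have key : ∀ N : ℕ, ∃ γ : ℝ → E, γ 0 = x₀ ∧
      ∀ t ∈ Set.Ioo (-((N:ℝ)+1)) ((N:ℝ)+1), HasDerivAt γ (F (γ t)) t := by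
    intro N
    have h0 : (0:ℝ) ∈ Set.Icc (-((N:ℝ)+1)) ((N:ℝ)+1) := by
      constructor <;> [nlinarith [Nat.cast_nonneg (α := ℝ) N]; positivity]
    have hp : IsPicardLindelof (fun _ => F) (⟨0, h0⟩ : Set.Icc (-((N:ℝ)+1)) ((N:ℝ)+1)) x₀
        (L * (N+1)) 0 L K := by
      refine ⟨fun t _ => hK.lipschitzOnWith, fun x _ => continuousOn_const,
        fun t _ x _ => hL x, ?_⟩
      simp
    obtain ⟨γ, h1, h2⟩ := hp.exists_eq_forall_mem_Icc_hasDerivWithinAt₀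
    refine ⟨γ, h1, fun t ht => ?_⟩
    exact (h2 t (Set.Ioo_subset_Icc_self ht)).hasDerivAt (Icc_mem_nhds ht.1 ht.2)
  choose γ hγ0 hγ using key
  have huniq : ∀ N M : ℕ, N ≤ M → Set.EqOn (γ N) (γ M) (Set.Ioo (-((N:ℝ)+1)) ((N:ℝ)+1)) := by
    intro N M hNM
    have hc : (N:ℝ) ≤ M := by exact_mod_cast hNM
    have hN := Nat.cast_nonneg (α := ℝ) N
    refine ODE_solution_unique_of_mem_Ioo (v := fun _ => F) (K := K) (s := fun _ => Set.univ)
      (t₀ := 0) (fun t _ => hK.lipschitzOnWith) ⟨by linarith, by linarith⟩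
      (fun t ht => ⟨hγ N t ht, trivial⟩)
      (fun t ht => ⟨hγ M t ⟨by linarith [ht.1], by linarith [ht.2]⟩, trivial⟩) ?_
    rw [hγ0, hγ0]
  refine ⟨fun t => γ ⌈|t|⌉₊ t, by simp [hγ0], fun t => ?_⟩
  set M := ⌈|t|⌉₊ + 1 with hM
  have ht : |t| < (M:ℝ) := by
    have := Nat.le_ceil |t|
    rw [hM]; push_cast; linarith
  have heq : ∀ s, |s| < (M:ℝ) → γ ⌈|s|⌉₊ s = γ M s := by
    intro s hs
    refine huniq _ _ (Nat.ceil_le.2 hs.le) ?_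
    have := Nat.le_ceil |s|
    have := abs_le.1 this
    constructor <;> linarith
  have hev : (fun t => γ ⌈|t|⌉₊ t) =ᶠ[𝓝 t] γ M := by
    filter_upwards [(isOpen_lt continuous_abs continuous_const).mem_nhds ht] with s hs
    exact heq s hs
  have h3 := hγ M t (by have := abs_lt.1 ht; constructor <;> linarith)
  have := h3.congr_of_eventuallyEq hev
  simpa only [heq t ht] using this

lemma aux_fence {f f' : ℝ → ℝ} {s T c : ℝ} (h : ∀ t ∈ Set.Ico s T, HasDerivAt f (f' t) t)
    (h0 : f s ≤ c) (hb : ∀ t ∈ Set.Ico s T, f t = c → f' t < 0) :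
    ∀ t ∈ Set.Ico s T, f t ≤ c := by
  intro t ht
  have hsub : ∀ x ∈ Set.Icc s t, x ∈ Set.Ico s T := fun x hx => ⟨hx.1, hx.2.trans_lt ht.2⟩
  refine image_le_of_deriv_right_lt_deriv_boundary' (f := f) (f' := f') (a := s) (b := t)
    (B := fun _ => c) (B' := fun _ => 0)
    (fun x hx => (h x (hsub x hx)).continuousAt.continuousWithinAt)
    (fun x hx => (h x (hsub x (Set.Ico_subset_Icc_self hx))).hasDerivWithinAt) h0
    continuousOn_const (fun x _ => hasDerivWithinAt_const _ _ _)
    (fun x hx => hb x (hsub x (Set.Ico_subset_Icc_self hx))) ⟨ht.1, le_rfl⟩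

lemma aux_reach {f f' : ℝ → ℝ} {s c k m : ℝ} (hk : 0 < k)
    (h : ∀ t, s ≤ t → HasDerivAt f (f' t) t) (hm : ∀ t, s ≤ t → m ≤ f t)
    (hb : ∀ t, s ≤ t → c ≤ f t → f' t ≤ -k) : ∃ t₁, s ≤ t₁ ∧ ∀ t, t₁ ≤ t → f t ≤ c := by
  have h1 : ∃ t₁, s ≤ t₁ ∧ f t₁ ≤ c := by
    by_contra! hcon
    have hms := hm s le_rfl
    have hd : 0 ≤ (f s - m + 1) / k := by apply div_nonneg <;> linarith
    set T := s + (f s - m + 1) / k with hT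
    have hsT : s ≤ T := by linarith
    have := image_le_of_deriv_right_le_deriv_boundary (f := f) (f' := f') (a := s) (b := T)
      (B := fun t => f s - k * (t - s)) (B' := fun _ => - k)
      (fun x hx => (h x hx.1).continuousAt.continuousWithinAt)
      (fun x hx => (h x hx.1).hasDerivWithinAt) (by simp) (by fun_prop)
      (fun x _ => by
        have : HasDerivAt (fun t => f s - k * (t - s)) (-k) x := by
          simpa using (((hasDerivAt_id x).sub_const s).const_mul k).const_sub (f s)
        exact this.hasDerivWithinAt)
      (fun x hx => hb x hx.1 (hcon x hx.1).le) (Set.right_mem_Icc.2 hsT)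
    have h2 := hm T hsT
    have : k * (T - s) = f s - m + 1 := by rw [hT]; field_simp; ring
    linarith
  obtain ⟨t₁, hs, hc⟩ := h1
  refine ⟨t₁, hs, fun t ht => ?_⟩
  refine aux_fence (f' := f') (s := t₁) (T := t + 1) (fun x hx => h x (hs.trans hx.1)) hc
    (fun x hx hxc => ?_) t ⟨ht, by linarith⟩
  have := hb x (hs.trans hx.1) hxc.ge
  linarith

lemma aux_compact [FiniteDimensional ℝ E] {W : E → ℝ} (hW : Continuous W) (hp : IsProper W)
    (c : ℝ) : IsCompact {x | W x ≤ c} := by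
  have : ProperSpace E := FiniteDimensional.proper ℝ E
  refine Metric.isCompact_of_isClosed_isBounded (isClosed_le hW continuous_const) ?_
  have := hp.eventually (eventually_gt_atTop c)
  rw [Bornology.isBounded_def]
  filter_upwards [this] with x hx
  simpa using hx

lemma aux_small [FiniteDimensional ℝ E] {W : E → ℝ} (hW : Continuous W) (hp : IsProper W)
    (hpos : IsPosDefFn W) {U : Set E} (hU : U ∈ 𝓝 (0:E)) :
    ∃ R > 0, ∀ x, W x ≤ R → x ∈ U := by
  have hc : IsCompact ({x | W x ≤ 1} \ interior U) := (aux_compact hW hp 1).diff isOpen_interior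
  obtain ⟨m, hm, hmin⟩ := hc.exists_forall_le' (f := W) (a := 0) hW.continuousOn (by
    rintro x ⟨_, hx⟩
    apply hpos.2
    rintro rfl
    exact hx (mem_interior_iff_mem_nhds.2 hU))
  refine ⟨min 1 (m/2), by positivity, fun x hx => ?_⟩
  by_contra hxU
  have := hmin x ⟨hx.trans (min_le_left _ _), fun h => hxU (interior_subset h)⟩
  have := hx.trans (min_le_right _ _)
  linarith

lemma aux_trap [FiniteDimensional ℝ E] {W : E → ℝ} (hW : ContDiff ℝ 1 W) (hp : IsProper W)
    (hpos : IsPosDefFn W)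
    {F : E → E} (hF : Continuous F) {c c' : ℝ}
    (hneg : ∀ x, c' ≤ W x → W x ≤ c → fderiv ℝ W x (F x) < 0) {χ : ℝ → E} {s : ℝ}
    (hχ : ∀ t, s ≤ t → HasDerivAt χ (F (χ t)) t) (hc : ∀ t, s ≤ t → W (χ t) ≤ c) :
    ∃ t₁, s ≤ t₁ ∧ ∀ t, t₁ ≤ t → W (χ t) ≤ c' := by
  have hcont : Continuous (fun x => fderiv ℝ W x (F x)) :=
    (hW.continuous_fderiv (by simp)).clm_apply hF
  have hcomp : IsCompact ({x | W x ≤ c} ∩ {x | c' ≤ W x}) :=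
    (aux_compact hW.continuous hp c).inter_right (isClosed_le continuous_const hW.continuous)
  obtain ⟨k, hk, hmin⟩ := hcomp.exists_forall_le' (f := fun x => - fderiv ℝ W x (F x)) (a := 0)
    hcont.neg.continuousOn (fun x hx => by have := hneg x hx.2 hx.1; simpa using this)
  refine aux_reach (f := fun t => W (χ t)) (f' := fun t => fderiv ℝ W (χ t) (F (χ t))) (m := 0) hk
    (fun t ht => ?_) (fun t _ => ?_) (fun t ht hct => ?_)
  · exact ((hW.differentiable (by simp)) (χ t)).hasFDerivAt.comp_hasDerivAt t (hχ t ht)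
  · by_cases h : χ t = 0
    · simp [h, hpos.1]
    · exact (hpos.2 _ h).le
  · have := hmin (χ t) ⟨hc t ht, hct⟩
    linarith

lemma aux_inv {W : E → ℝ} (hW : ContDiff ℝ 1 W) {F : E → E} {c : ℝ}
    (hneg : ∀ x, W x = c → fderiv ℝ W x (F x) < 0) {χ : ℝ → E} {s T : ℝ}
    (hχ : ∀ t ∈ Set.Ico s T, HasDerivAt χ (F (χ t)) t) (h0 : W (χ s) ≤ c) :
    ∀ t ∈ Set.Ico s T, W (χ t) ≤ c := by
  refine aux_fence (f := fun t => W (χ t)) (f' := fun t => fderiv ℝ W (χ t) (F (χ t)))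
    (fun t ht => ?_) h0 (fun t _ h => hneg _ h)
  exact ((hW.differentiable (by simp)) (χ t)).hasFDerivAt.comp_hasDerivAt t (hχ t ht)

lemma aux_gas [FiniteDimensional ℝ E] {V W : E → ℝ} (hV : ContDiff ℝ 1 V) (hW : ContDiff ℝ 1 W)
    (hVp : IsProper V) (hWp : IsProper W) (hVpos : IsPosDefFn V) (hWpos : IsPosDefFn W)
    {F : E → E} (hF : ContDiff ℝ 1 F) {c ε : ℝ} (hc : 0 < c)
    (hsub : ∀ x, W x ≤ ε → V x ≤ c)
    (hVneg : ∀ x, 0 < V x → V x ≤ c → fderiv ℝ V x (F x) < 0)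
    (hWneg : ∀ x, ε ≤ W x → fderiv ℝ W x (F x) < 0) : IsGAS F := by
  have : CompleteSpace E := FiniteDimensional.complete ℝ E
  have : ProperSpace E := FiniteDimensional.proper ℝ E
  constructor
  · intro e he
    obtain ⟨R, hR, hRs⟩ := aux_small hV.continuous hVp hVpos (Metric.closedBall_mem_nhds (0:E) he)
    have hm : 0 < min R c := lt_min hR hc
    have : {x | V x < min R c} ∈ 𝓝 (0:E) :=
      (isOpen_lt hV.continuous continuous_const).mem_nhds (by simpa [hVpos.1] using ⟨hR, hc⟩)
    obtain ⟨δ, hδ, hδs⟩ := Metric.nhds_basis_closedBall.mem_iff.1 this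
    refine ⟨δ, hδ, fun χ T hχ h0 t ht => ?_⟩
    have h0' : V (χ 0) < min R c := hδs (by simpa using h0)
    have := aux_inv hV (c := min R c) (fun x hx => hVneg x (hx ▸ hm) (hx ▸ min_le_right _ _))
      hχ h0'.le t ht
    simpa using hRs _ (this.trans (min_le_left _ _))
  · intro x₀
    set R₀ := max (W x₀) ε with hR₀
    obtain ⟨r, hr⟩ := (aux_compact hW.continuous hWp R₀).isBounded.subset_closedBall (0:E)
    let φ : ContDiffBump (0:E) := ⟨max r 1, max r 1 + 1, by positivity, by linarith⟩
    have hφ : ∀ x, W x ≤ R₀ → φ x = 1 := fun x hx =>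
      φ.one_of_mem_closedBall (Metric.closedBall_subset_closedBall (le_max_left _ _) (hr hx))
    let G : E → E := fun x => φ x • F x
    have hG : ContDiff ℝ 1 G := φ.contDiff.smul hF
    have hGs : HasCompactSupport G := φ.hasCompactSupport.smul_right
    obtain ⟨K, hK⟩ := hG.lipschitzWith_of_hasCompactSupport hGs (by simp)
    obtain ⟨L, hL⟩ := hGs.exists_bound_of_continuous hG.continuous
    have hL0 : 0 ≤ L := (norm_nonneg _).trans (hL 0)
    obtain ⟨χ, hχ0, hχ⟩ := aux_gexist G K ⟨L, hL0⟩ hK hL x₀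
    have hGF : ∀ x, W x ≤ R₀ → G x = F x := fun x hx => by simp [G, hφ x hx]
    have hin : ∀ t, 0 ≤ t → W (χ t) ≤ R₀ := fun t ht =>
      aux_inv hW (F := G) (c := R₀) (fun x hx => by
        rw [hGF x hx.le]; exact hWneg x (hx ▸ le_max_right _ _)) (s := 0) (T := t + 1)
        (fun t _ => hχ t) (hχ0 ▸ le_max_left _ _) t ⟨ht, by linarith⟩
    have hχF : ∀ t, 0 ≤ t → HasDerivAt χ (F (χ t)) t := fun t ht => hGF _ (hin t ht) ▸ hχ t
    refine ⟨χ, hχ0, hχF, ?_⟩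
    obtain ⟨t₁, ht₁, h1⟩ := aux_trap hW hWp hWpos hF.continuous (c := R₀) (c' := ε)
      (fun x hx _ => hWneg x hx) hχF hin
    have hχ1 : ∀ t, t₁ ≤ t → HasDerivAt χ (F (χ t)) t := fun t ht => hχF t (ht₁.trans ht)
    have hVin : ∀ t, t₁ ≤ t → V (χ t) ≤ c := fun t ht => hsub _ (h1 t ht)
    rw [Metric.tendsto_atTop]
    intro e he
    obtain ⟨R, hR, hRs⟩ := aux_small hV.continuous hVp hVpos (Metric.ball_mem_nhds (0:E) he)
    obtain ⟨t₂, _, h2⟩ := aux_trap hV hVp hVpos hF.continuous (c := c) (c' := R)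
      (fun x hx => hVneg x (hR.trans_le hx)) hχ1 hVin
    exact ⟨t₂, fun t ht => hRs _ (h2 t ht)⟩

lemma aux_quad_s3 [FiniteDimensional ℝ E] {q : E → ℝ} (hq : Continuous q)
    (hhom : ∀ (r : ℝ) x, q (r • x) = r^2 * q x) (hpos : ∀ x, x ≠ 0 → 0 < q x) :
    ∃ k > 0, ∀ x, k * ‖x‖^2 ≤ q x := by
  have : ProperSpace E := FiniteDimensional.proper ℝ E
  obtain ⟨k, hk, hmin⟩ := (isCompact_sphere (0:E) 1).exists_forall_le' (f := q) (a := 0)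
    hq.continuousOn (fun x hx => hpos x (by rintro rfl; simp at hx))
  refine ⟨k, hk, fun x => ?_⟩
  by_cases hx : x = 0
  · have := hhom 0 0
    subst hx; simp at this; simp [this]
  · have hx' : ‖x‖ ≠ 0 := norm_ne_zero_iff.2 hx
    have h1 := hmin (‖x‖⁻¹ • x) (by simp [norm_smul, hx'])
    rw [hhom] at h1
    calc k * ‖x‖^2 ≤ (‖x‖⁻¹^2 * q x) * ‖x‖^2 := by gcongr
      _ = q x := by field_simp

lemma aux_local [FiniteDimensional ℝ E] {D : E → E →L[ℝ] ℝ} {D2 : E →L[ℝ] E →L[ℝ] ℝ}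
    {G : E → E} {M : E →L[ℝ] E}
    (hD : HasFDerivAt D D2 0) (hD0 : D 0 = 0) (hG : HasFDerivAt G M 0) (hG0 : G 0 = 0)
    (hneg : ∀ x, x ≠ 0 → D2 x (M x) < 0) :
    ∀ᶠ x in 𝓝 (0:E), x ≠ 0 → D x (G x) < 0 := by
  obtain ⟨k, hk, hq⟩ := aux_quad_s3 (q := fun x => - D2 x (M x)) (by fun_prop)
    (fun r x => by simp; ring) (fun x hx => by simpa using hneg x hx)
  have e1 : (fun x => D x - D2 x) =o[𝓝 0] (fun x : E => x) := by
    have := hD.isLittleO; simpa [hD0] using this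
  have e2 : (fun x => G x - M x) =o[𝓝 0] (fun x : E => x) := by
    have := hG.isLittleO; simpa [hG0] using this
  -- choose small constants
  set C := ‖D2‖ + ‖M‖ + 2 with hC
  have hCpos : 0 < C := by positivity
  have hη : 0 < min 1 (k / (2 * C)) := by positivity
  set η := min 1 (k / (2 * C)) with hηd
  have hη1 : η ≤ 1 := min_le_left _ _
  have hη2 : η * (2 * C) ≤ k := by
    have := min_le_right 1 (k / (2 * C))
    rwa [← hηd, le_div_iff₀ (by positivity)] at this
  filter_upwards [e1.def hη, e2.def hη] with x h1 h2 hx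
  have hxp : 0 < ‖x‖ := norm_pos_iff.2 hx
  have hGx : ‖G x‖ ≤ (‖M‖ + 1) * ‖x‖ := by
    calc ‖G x‖ = ‖(G x - M x) + M x‖ := by simp
      _ ≤ ‖G x - M x‖ + ‖M x‖ := norm_add_le _ _
      _ ≤ η * ‖x‖ + ‖M‖ * ‖x‖ := add_le_add h2 (M.le_opNorm x)
      _ ≤ (‖M‖ + 1) * ‖x‖ := by nlinarith
  have i1 : (D x - D2 x) (G x) ≤ η * ‖x‖ * ((‖M‖ + 1) * ‖x‖) := by
    refine (le_abs_self _).trans (((D x - D2 x).le_opNorm _).trans ?_)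
    gcongr
  have i2 : D2 x (G x - M x) ≤ ‖D2‖ * ‖x‖ * (η * ‖x‖) := by
    refine (le_abs_self _).trans (((D2 x).le_opNorm _).trans ?_)
    gcongr
    exact D2.le_opNorm x
  have i3 := hq x
  have : D x (G x) = (D x - D2 x) (G x) + D2 x (G x - M x) + D2 x (M x) := by
    simp
  rw [this]
  have h5 : η * ‖x‖ * ((‖M‖ + 1) * ‖x‖) + ‖D2‖ * ‖x‖ * (η * ‖x‖) ≤ (k / 2) * ‖x‖^2 := by
    have : η * ‖x‖ * ((‖M‖ + 1) * ‖x‖) + ‖D2‖ * ‖x‖ * (η * ‖x‖)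
      = η * (C - 1) * ‖x‖^2 := by rw [hC]; ring
    rw [this]
    gcongr
    nlinarith
  have : 0 < k * ‖x‖^2 := by positivity
  linarith

end helpers

section helpers2

variable {n p : ℕ}

lemma aux_mat {Q M : Matrix (Fin n) (Fin n) ℝ} (hQ : Q.PosDef)
    (h : (-(Mᵀ * Q + Q * M)).PosDef) {x : Fin n → ℝ} (hx : x ≠ 0) :
    x ⬝ᵥ Q *ᵥ (M *ᵥ x) < 0 := by
  have h1 := h.dotProduct_mulVec_pos hx
  have hs : Qᵀ = Q := by have := hQ.isHermitian; rwa [Matrix.IsHermitian, Matrix.conjTranspose_eq_transpose_of_trivial] at this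
  have h2 : x ⬝ᵥ (Mᵀ * Q) *ᵥ x = x ⬝ᵥ (Q * M) *ᵥ x := by
    rw [← Matrix.dotProduct_transpose_mulVec, Matrix.transpose_mul, Matrix.transpose_transpose, hs]
  simp only [star_trivial, Matrix.neg_mulVec, Matrix.add_mulVec, dotProduct_neg,
    dotProduct_add, h2] at h1
  rw [Matrix.mulVec_mulVec]
  linarith

lemma aux_hess {W : (Fin n → ℝ) → ℝ} (x v : Fin n → ℝ) :
    fderiv ℝ (fderiv ℝ W) 0 x v = x ⬝ᵥ hessianAt W 0 *ᵥ v := by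
  have : Matrix.toLinearMap₂' ℝ (hessianAt W 0) =
      (LinearMap.mk₂ ℝ (fun x v => fderiv ℝ (fderiv ℝ W) 0 x v)
        (by intros; simp) (by intros; simp) (by intros; simp) (by intros; simp)) := by
    refine LinearMap.ext_basis (Pi.basisFun ℝ (Fin n)) (Pi.basisFun ℝ (Fin n)) fun i j => ?_
    simp [Matrix.toLinearMap₂'_apply', hessianAt, iteratedFDeriv_two_apply]
  rw [← Matrix.toLinearMap₂'_apply', this]
  rfl

lemma aux_deriv {a : (Fin n → ℝ) → (Fin n → ℝ)} {b : (Fin n → ℝ) → Fin n → Fin p → ℝ}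
    {A : Matrix (Fin n) (Fin n) ℝ} {B : Matrix (Fin n) (Fin p) ℝ} (K : Matrix (Fin p) (Fin n) ℝ)
    (ha : ContDiff ℝ 1 a) (hA : ∀ v, fderiv ℝ a 0 v = A.mulVec v)
    (hb : ContDiff ℝ 1 b) (hB : B = Matrix.of (b 0)) :
    HasFDerivAt (fun x => a x + (Matrix.of (b x)) *ᵥ (K *ᵥ x))
      (LinearMap.toContinuousLinearMap (Matrix.toLin' (A + B * K))) 0 := by
  have h1 : HasFDerivAt a (fderiv ℝ a 0) 0 :=
    ((ha.differentiable (by simp)) 0).hasFDerivAt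
  have h2 : HasFDerivAt (fun x => (Matrix.of (b x)) *ᵥ (K *ᵥ x))
      (LinearMap.toContinuousLinearMap (Matrix.toLin' (B * K))) 0 := by
    rw [hasFDerivAt_pi']
    intro i
    have hbij : ∀ j, HasFDerivAt (fun x => b x i j) (fderiv ℝ (fun x => b x i j) 0) 0 := by
      intro j
      have : ContDiff ℝ 1 (fun x => b x i j) := by fun_prop
      exact ((this.differentiable (by simp)) 0).hasFDerivAt
    have hK : ∀ j, HasFDerivAt (fun x : Fin n → ℝ => (K *ᵥ x) j)
        ((ContinuousLinearMap.proj j).comp (LinearMap.toContinuousLinearMap (Matrix.toLin' K))) 0 :=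
      fun j => ((ContinuousLinearMap.proj (R := ℝ) (φ := fun _ : Fin p => ℝ) j).comp
        (LinearMap.toContinuousLinearMap (Matrix.toLin' K))).hasFDerivAt
    have := HasFDerivAt.fun_sum (u := Finset.univ) (fun j _ => (hbij j).mul (hK j))
    refine this.congr_fderiv ?_
    ext v
    simp [hB, ← Matrix.mulVec_mulVec, Matrix.mulVec, dotProduct]
  refine (h1.add h2).congr_fderiv ?_
  ext v i
  simp [hA, Matrix.add_mulVec]

lemma aux_imp {F : Type*} [AddCommGroup F] [Module ℝ F] (q : Prop) {S : Set F}
    (hS : Convex ℝ S) : Convex ℝ {u | q → u ∈ S} := by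
  by_cases h : q
  · simpa [h] using hS
  · simpa [h] using convex_univ

lemma aux_half (ℓ : (Fin n → ℝ) →L[ℝ] ℝ) (v : Fin n → ℝ) (M : Matrix (Fin n) (Fin p) ℝ) :
    Convex ℝ {u : Fin p → ℝ | ℓ (v + M *ᵥ u) < 0} := by
  have := convex_halfSpace_lt (𝕜 := ℝ) (f := fun u : Fin p → ℝ => ℓ (M *ᵥ u))
    ⟨fun x y => by simp [Matrix.mulVec_add], fun c x => by simp [Matrix.mulVec_smul]⟩ (-ℓ v)
  have he : {u : Fin p → ℝ | ℓ (v + M *ᵥ u) < 0} = {u | ℓ (M *ᵥ u) < -ℓ v} := by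
    ext u
    simp only [Set.mem_setOf_eq, map_add]
    constructor <;> intro h <;> linarith
  rw [he]
  exact this

lemma aux_cont {b : (Fin n → ℝ) → Fin n → Fin p → ℝ} {k : WithTop ℕ∞} (hb : ContDiff ℝ k b)
    {f : (Fin n → ℝ) → Fin p → ℝ} (hf : ContDiff ℝ k f) :
    ContDiff ℝ k (fun x => (Matrix.of (b x)) *ᵥ (f x)) := by
  rw [contDiff_pi]
  intro i
  simp only [Matrix.mulVec, dotProduct, Matrix.of_apply]
  fun_prop

lemma aux_artstein {ℓ : (Fin n → ℝ) →L[ℝ] ℝ} {v : Fin n → ℝ} {M : Fin n → Fin p → ℝ}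
    (h : (∀ i, ℓ (fun k => M k i) = 0) → ℓ v < 0) :
    ∃ u : Fin p → ℝ, ℓ (v + (Matrix.of M) *ᵥ u) < 0 := by
  by_cases h0 : ∀ i, ℓ (fun k => M k i) = 0
  · exact ⟨0, by simpa using h h0⟩
  · push Not at h0
    obtain ⟨i, hi⟩ := h0
    refine ⟨Pi.single i ((-ℓ v - 1) / ℓ (fun k => M k i)), ?_⟩
    have : (Matrix.of M) *ᵥ (Pi.single i ((-ℓ v - 1) / ℓ (fun k => M k i)))
        = ((-ℓ v - 1) / ℓ (fun k => M k i)) • (fun k => M k i) := by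
      ext k; simp [div_eq_mul_inv, mul_comm]
    rw [this, map_add, map_smul, smul_eq_mul, div_mul_cancel₀ _ hi]
    linarith

lemma aux_ctrl {a : (Fin n → ℝ) → (Fin n → ℝ)} {b : (Fin n → ℝ) → Fin n → Fin p → ℝ}
    {K Ku : Matrix (Fin p) (Fin n) ℝ} (ha : ContDiff ℝ 1 a) (hb : ContDiff ℝ 1 b)
    {V W : (Fin n → ℝ) → ℝ} (hV : ContDiff ℝ 1 V) (hW : ContDiff ℝ 1 W) (hW0 : W 0 = 0)
    (hArt : ∀ χ : Fin n → ℝ, χ ≠ 0 →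
        (∀ i, fderiv ℝ W χ (fun k => b χ k i) = 0) → fderiv ℝ W χ (a χ) < 0)
    {R c ε : ℝ} (hε : 0 < ε)
    (h1 : ∀ x, x ≠ 0 → W x < R → fderiv ℝ V x (a x + (Matrix.of (b x)) *ᵥ (K *ᵥ x)) < 0)
    (h2 : ∀ x, x ≠ 0 → W x < R → fderiv ℝ V x (a x + (Matrix.of (b x)) *ᵥ (Ku *ᵥ x)) < 0)
    (h3 : ∀ x, x ≠ 0 → W x < R → fderiv ℝ W x (a x + (Matrix.of (b x)) *ᵥ (Ku *ᵥ x)) < 0)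
    (hcR : ∀ x, V x ≤ c → W x < R) :
    ∃ α : (Fin n → ℝ) → (Fin p → ℝ), ContDiff ℝ (⊤ : ℕ∞) α ∧ (∀ᶠ x in 𝓝 0, α x = K *ᵥ x) ∧
      (∀ x, ε ≤ W x → fderiv ℝ W x (a x + (Matrix.of (b x)) *ᵥ (α x)) < 0) ∧
      (∀ x, x ≠ 0 → V x ≤ c → fderiv ℝ V x (a x + (Matrix.of (b x)) *ᵥ (α x)) < 0) := by
  have hnb : {x | W x < ε} ∈ 𝓝 (0 : Fin n → ℝ) :=
    (isOpen_lt hW.continuous continuous_const).mem_nhds (by simpa [hW0] using hε)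
  obtain ⟨ρ2, hρ2, hρs⟩ := Metric.mem_nhds_iff.1 hnb
  set ρ := ρ2 / 2 with hρ
  have hρpos : 0 < ρ := by positivity
  let t : (Fin n → ℝ) → Set (Fin p → ℝ) := fun x =>
    {u | ‖x‖ ≤ ρ → u ∈ ({K *ᵥ x} : Set (Fin p → ℝ))} ∩
    ({u | ε ≤ W x → u ∈ {u | fderiv ℝ W x (a x + (Matrix.of (b x)) *ᵥ u) < 0}} ∩
     {u | x ≠ 0 → u ∈ {u | V x ≤ c → u ∈ {u | fderiv ℝ V x (a x + (Matrix.of (b x)) *ᵥ u) < 0}}})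
  have ht : ∀ x, Convex ℝ (t x) := fun x =>
    (aux_imp _ (convex_singleton _)).inter ((aux_imp _ (aux_half _ _ _)).inter
      (aux_imp _ (aux_imp _ (aux_half _ _ _))))
  have hloc : ∀ x : Fin n → ℝ, ∃ U ∈ 𝓝 x, ∃ g : (Fin n → ℝ) → (Fin p → ℝ),
      ContMDiffOn (modelWithCornersSelf ℝ (Fin n → ℝ)) (modelWithCornersSelf ℝ (Fin p → ℝ))
        ((⊤ : ℕ∞) : WithTop ℕ∞) g U ∧ ∀ y ∈ U, g y ∈ t y := by
    intro x
    have hlin : ∀ L : Matrix (Fin p) (Fin n) ℝ,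
        ContDiff ℝ ((⊤ : ℕ∞) : WithTop ℕ∞) (fun x : Fin n → ℝ => L *ᵥ x) := fun L =>
      (LinearMap.toContinuousLinearMap (Matrix.toLin' L)).contDiff
    by_cases hx1 : ‖x‖ < ρ2
    · refine ⟨Metric.ball 0 ρ2, Metric.isOpen_ball.mem_nhds (by simpa using hx1),
        fun y => K *ᵥ y, (hlin K).contMDiff.contMDiffOn, fun y hy => ⟨fun _ => rfl, ?_, ?_⟩⟩
      · intro h
        exact absurd (hρs hy) (not_lt.2 h)
      · intro hy0 hyc
        exact h1 y hy0 (hcR y hyc)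
    have hx2 : ρ < ‖x‖ := by linarith [not_lt.1 hx1]
    have hO : {y : Fin n → ℝ | ρ < ‖y‖} ∈ 𝓝 x :=
      (isOpen_lt continuous_const continuous_norm).mem_nhds hx2
    by_cases hx3 : W x < R
    · refine ⟨_, inter_mem hO ((isOpen_lt hW.continuous continuous_const).mem_nhds hx3),
        fun y => Ku *ᵥ y, (hlin Ku).contMDiff.contMDiffOn, fun y hy => ⟨?_, ?_, ?_⟩⟩
      · intro h
        exact absurd hy.1 (not_lt.2 h)
      · intro h
        refine h3 y ?_ hy.2
        rintro rfl
        have : ρ < ‖(0 : Fin n → ℝ)‖ := hy.1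
        simp at this; linarith
      · intro hy0 _
        exact h2 y hy0 hy.2
    · have hx0 : x ≠ 0 := by rintro rfl; simp at hx2; linarith
      obtain ⟨u, hu⟩ := aux_artstein (hArt x hx0)
      have hVx : c < V x := by
        by_contra h
        exact hx3 (hcR x (not_lt.1 h))
      have hcont : Continuous (fun y => fderiv ℝ W y (a y + (Matrix.of (b y)) *ᵥ u)) :=
        (hW.continuous_fderiv (by simp)).clm_apply
          (ha.continuous.add (aux_cont hb contDiff_const).continuous)
      refine ⟨_, inter_mem hO (inter_mem ((isOpen_lt hcont continuous_const).mem_nhds hu)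
        ((isOpen_lt continuous_const hV.continuous).mem_nhds hVx)),
        fun _ => u, contMDiffOn_const, fun y hy => ⟨?_, ?_, ?_⟩⟩
      · intro h
        exact absurd hy.1 (not_lt.2 h)
      · intro _
        exact hy.2.1
      · intro _ h
        exact absurd hy.2.2 (not_lt.2 h)
  obtain ⟨g, hg⟩ := exists_contMDiffMap_forall_mem_convex_of_local
    (modelWithCornersSelf ℝ (Fin n → ℝ)) (n := ⊤) ht hloc
  refine ⟨g, g.contMDiff.contDiff, ?_, fun x hx => (hg x).2.1 hx,
    fun x hx hc => (hg x).2.2 hx hc⟩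
  filter_upwards [Metric.closedBall_mem_nhds (0 : Fin n → ℝ) hρpos] with x hx
  exact (hg x).1 (by simpa using hx)

end helpers2

/-- uniting via matrix inequalities. If `V∞` is a `C²` proper positive
definite global CLF with positive definite half-Hessian `P∞ := ½ H(V∞)(0)`, `A + BK` is
Hurwitz, and there are `K_u` and a positive definite `P` making the three Lyapunov
matrix expressions negative definite, then there is a smooth feedback `α₀` with
`α₀ 0 = 0` and `Dα₀(0) = K` rendering the origin globally asymptotically stable. -/
theorem stmt3 {n p : ℕ}
    (a : (Fin n → ℝ) → (Fin n → ℝ)) (b : (Fin n → ℝ) → Fin n → Fin p → ℝ)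
    (A : Matrix (Fin n) (Fin n) ℝ) (B : Matrix (Fin n) (Fin p) ℝ)
    (K Ku : Matrix (Fin p) (Fin n) ℝ) (P : Matrix (Fin n) (Fin n) ℝ)
    (ha : ContDiff ℝ 1 a) (ha0 : a 0 = 0)
    (hA : ∀ v, fderiv ℝ a 0 v = A.mulVec v)
    (hb : ContDiff ℝ 1 b) (hB : B = Matrix.of (b 0))
    (Vinf : (Fin n → ℝ) → ℝ)
    (hVinf : ContDiff ℝ 2 Vinf) (hVinfnonneg : ∀ χ, 0 ≤ Vinf χ)
    (hVinfproper : IsProper Vinf) (hVinfpos : IsPosDefFn Vinf)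
    (hArtstein : ∀ χ : Fin n → ℝ, χ ≠ 0 →
        (∀ i, fderiv ℝ Vinf χ (fun k => b χ k i) = 0) → fderiv ℝ Vinf χ (a χ) < 0)
    (hPinf : (((1:ℝ)/2) • hessianAt Vinf 0).PosDef)
    (hHurwitz : Hurwitz (A + B * K))
    (hP : P.PosDef)
    (hIneq1 : (-((A + B * K)ᵀ * P + P * (A + B * K))).PosDef)
    (hIneq2 : (-((A + B * Ku)ᵀ * P + P * (A + B * Ku))).PosDef)
    (hIneq3 : (-((A + B * Ku)ᵀ * (((1:ℝ)/2) • hessianAt Vinf 0)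
        + (((1:ℝ)/2) • hessianAt Vinf 0) * (A + B * Ku))).PosDef) :
    ∃ α₀ : (Fin n → ℝ) → (Fin p → ℝ), ContDiff ℝ (⊤ : ℕ∞) α₀ ∧ α₀ 0 = 0 ∧
      (∀ v, fderiv ℝ α₀ 0 v = K.mulVec v) ∧
      IsGAS (fun χ => a χ + (Matrix.of (b χ)).mulVec (α₀ χ)) := by
  -- the quadratic Lyapunov function
  let β : (Fin n → ℝ) →L[ℝ] (Fin n → ℝ) →L[ℝ] ℝ :=
    (Matrix.toLinearMap₂' ℝ P).toContinuousBilinearMap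
  have hβ : ∀ x v, β x v = x ⬝ᵥ P *ᵥ v := fun x v => Matrix.toLinearMap₂'_apply' P x v
  have hPs : Pᵀ = P := by have := hP.isHermitian; rwa [Matrix.IsHermitian, Matrix.conjTranspose_eq_transpose_of_trivial] at this
  have hβs : ∀ x v, β x v = β v x := fun x v => by
    rw [hβ, hβ, ← Matrix.dotProduct_transpose_mulVec, hPs]
  let V : (Fin n → ℝ) → ℝ := fun x => β x x
  have hV : ContDiff ℝ 1 V := by
    have h : ContDiff ℝ 1 (fun x => β x) := β.contDiff
    exact h.clm_apply contDiff_id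
  have hVd : fderiv ℝ V = fun x => ((2:ℝ) • β) x := by
    funext x
    have h := (β.hasFDerivAt (x := x)).clm_apply (hasFDerivAt_id x)
    refine (HasFDerivAt.fderiv (f := V) h).trans ?_
    ext v
    simp [hβs v x, two_mul]
  have hVpos : IsPosDefFn V := by
    refine ⟨by simp [V], fun x hx => ?_⟩
    have := hP.dotProduct_mulVec_pos hx
    simpa [V, hβ] using this
  have hVp : IsProper V := by
    obtain ⟨k, hk, hq⟩ := aux_quad_s3 (q := V) hV.continuous
      (fun r x => by simp [V]; ring) hVpos.2
    refine tendsto_atTop_mono hq ?_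
    exact ((tendsto_pow_atTop (by norm_num)).comp tendsto_norm_cobounded_atTop).const_mul_atTop hk
  have hW : ContDiff ℝ 1 Vinf := hVinf.of_le (by norm_num)
  -- local negativity
  have hVloc : ∀ L : Matrix (Fin p) (Fin n) ℝ,
      (-((A + B * L)ᵀ * P + P * (A + B * L))).PosDef →
      ∀ᶠ x in 𝓝 (0 : Fin n → ℝ), x ≠ 0 →
        fderiv ℝ V x (a x + (Matrix.of (b x)) *ᵥ (L *ᵥ x)) < 0 := by
    intro L hL
    rw [hVd]
    refine aux_local (((2:ℝ) • β).hasFDerivAt) (by simp) (aux_deriv L ha hA hb hB)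
      (by simp [ha0]) (fun x hx => ?_)
    have := aux_mat hP hL hx
    have h2 : ((2:ℝ) • β) x (LinearMap.toContinuousLinearMap (Matrix.toLin' (A + B * L)) x)
        = 2 * (x ⬝ᵥ P *ᵥ ((A + B * L) *ᵥ x)) := by
      rw [← hβ]; rfl
    rw [h2]; linarith
  have hWloc : ∀ᶠ x in 𝓝 (0 : Fin n → ℝ), x ≠ 0 →
        fderiv ℝ Vinf x (a x + (Matrix.of (b x)) *ᵥ (Ku *ᵥ x)) < 0 := by
    have hd : ContDiff ℝ 1 (fderiv ℝ Vinf) := hVinf.fderiv_right (by norm_num)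
    refine aux_local ((hd.differentiable (by simp)) 0).hasFDerivAt ?_
      (aux_deriv Ku ha hA hb hB) (by simp [ha0]) (fun x hx => ?_)
    · refine IsLocalMin.fderiv_eq_zero (Filter.Eventually.of_forall fun x => ?_)
      rw [hVinfpos.1]; exact hVinfnonneg x
    · have := aux_mat hPinf hIneq3 hx
      rw [Matrix.smul_mulVec, dotProduct_smul, smul_eq_mul] at this
      rw [aux_hess]
      simp only [LinearMap.coe_toContinuousLinearMap', Matrix.toLin'_apply]
      linarith
  obtain ⟨R, hR, hRs⟩ := aux_small hW.continuous hVinfproper hVinfpos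
    ((hVloc K hIneq1).and ((hVloc Ku hIneq2).and hWloc))
  obtain ⟨c, hc, hcs⟩ := aux_small hV.continuous hVp hVpos
    ((isOpen_lt hW.continuous continuous_const).mem_nhds
      (show Vinf 0 < R by rw [hVinfpos.1]; exact hR))
  obtain ⟨ε, hε, hεs⟩ := aux_small hW.continuous hVinfproper hVinfpos
    ((isOpen_lt hV.continuous continuous_const).mem_nhds
      (show V 0 < c by rw [hVpos.1]; exact hc))
  obtain ⟨α, hα, hαK, hαW, hαV⟩ := aux_ctrl (K := K) (Ku := Ku) (R := R) (c := c) ha hb hV hW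
    hVinfpos.1 hArtstein hε (fun x h0 hx => (hRs x hx.le).1 h0)
    (fun x h0 hx => (hRs x hx.le).2.1 h0) (fun x h0 hx => (hRs x hx.le).2.2 h0) hcs
  refine ⟨α, hα, by simpa using hαK.self_of_nhds, fun v => ?_, ?_⟩
  · have h : α =ᶠ[𝓝 0] (LinearMap.toContinuousLinearMap (Matrix.toLin' K)) := hαK
    rw [h.fderiv_eq, ContinuousLinearMap.fderiv]
    rfl
  · refine aux_gas hV hW hVp hVinfproper hVpos hVinfpos
      (ha.add (aux_cont hb (hα.of_le (by exact_mod_cast le_top)))) hc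
      (fun x hx => (hεs x hx).le) (fun x h0 hx => hαV x ?_ hx) hαW
    rintro rfl
    simp [hVpos.1] at h0
end
end
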